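/- arXiv:2205.04091 — 6 statements merged into one kernel-verified Lean document; each statement's English description precedes it below -/
import Mathlib

section
/- Fix h > 0. For all real x, ξ: W_{h,ℝ}(ψ_0,ψ_0)(x,ξ) = 1; W_{h,ℝ}(ψ_0,ψ_1)(x,ξ) = √(2/h)·(x + iξ); and W_{h,ℝ}(ψ_1,ψ_1)(x,ξ) = −1 + (2/h)·(x² + ξ²). -/
open Real MeasureTheory

/-- Hermite functions: `psi h j x = ((−1)^j/√(j!))·(h/2)^{j/2}·e^{x²/h}·(d/dx)^j(e^{−x²/h})(x)`. -/
noncomputable def psi (h : ℝ) (j : ℕ) (x : ℝ) : ℝ :=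
  ((-1 : ℝ) ^ j / Real.sqrt (Nat.factorial j)) * (h / 2) ^ ((j : ℝ) / 2) *
    Real.exp (x ^ 2 / h) * iteratedDeriv j (fun t => Real.exp (-t ^ 2 / h)) x

/-- The one-dimensional Gaussian Wigner function `W_{h,ℝ}(f,g)`. -/
noncomputable def wigner1 (h : ℝ) (f g : ℝ → ℂ) (z ζ : ℝ) : ℂ :=
  (Real.exp (ζ ^ 2 / h) : ℂ) *
    ∫ t : ℝ, Complex.exp (-2 * Complex.I * (ζ : ℂ) * (t : ℂ) / (h : ℂ)) * f (z + t) *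
      (starRingEnd ℂ) (g (z - t)) * (Real.exp (-t ^ 2 / h) : ℂ) *
        (((π * h) ^ (-(1 : ℝ) / 2) : ℝ) : ℂ)

/-!
The factor `exp (-2iζt/h) exp (-t²/h)` turns the Wigner function into a Laplace transform, at the
imaginary point `s = -2iζ/h`, of the centred Gaussian measure of variance `v = h/2`. Differentiating
`∫ exp (sx) = exp (v s²/2)` in `s` shows that, after the prefactor `exp (ζ²/h)` is cancelled,
integration acts on polynomials of degree at most two as if `t` were a Gaussian variable with mean
`v s = -iζ` and variance `v`. So `f (z + t)` is centred at `w = z - iζ` and `g (z - t)` at `conj w`;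
for affine `f`, `g` the answer is `f(w) conj (g(w))` minus the covariance term `f' conj (g') h/2`.
-/

section GaussianMoments

open ProbabilityTheory
open scoped NNReal

variable (m : ℝ) (v : ℝ≥0) (s : ℂ)

lemma hasDerivAt_cexp_linear_add_quadratic (p q : ℂ) :
    HasDerivAt (fun s : ℂ => Complex.exp (s * p + q * s ^ 2 / 2))
      ((p + q * s) * Complex.exp (s * p + q * s ^ 2 / 2)) s := by
  have hexponent : HasDerivAt (fun s : ℂ => s * p + q * s ^ 2 / 2) (p + q * s) s := by
    refine (((hasDerivAt_id s).mul_const p).add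
      (((hasDerivAt_pow 2 s).const_mul q).div_const 2)).congr_deriv ?_
    push_cast
    ring
  exact hexponent.cexp.congr_deriv (mul_comm _ _)

lemma integrable_pow_mul_cexp_gaussianReal (n : ℕ) :
    Integrable (fun x : ℝ => (x : ℂ) ^ n * Complex.exp (s * x)) (gaussianReal m v) :=
  integrable_pow_mul_cexp_of_re_mem_interior_integrableExpSet (X := id) (by simp) n

lemma integral_cexp_gaussianReal :
    ∫ x : ℝ, Complex.exp (s * x) ∂gaussianReal m v = Complex.exp (s * m + v * s ^ 2 / 2) :=
  complexMGF_id_gaussianReal s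

lemma integral_mul_cexp_gaussianReal :
    ∫ x : ℝ, (x : ℂ) * Complex.exp (s * x) ∂gaussianReal m v =
      (m + v * s) * Complex.exp (s * m + v * s ^ 2 / 2) := by
  have hderiv := hasDerivAt_complexMGF (X := id) (μ := gaussianReal m v) (z := s) (by simp)
  rw [funext (complexMGF_id_gaussianReal (μ := m) (v := v))] at hderiv
  exact hderiv.unique (hasDerivAt_cexp_linear_add_quadratic s m v)

lemma integral_sq_mul_cexp_gaussianReal :
    ∫ x : ℝ, (x : ℂ) ^ 2 * Complex.exp (s * x) ∂gaussianReal m v =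
      ((m + v * s) ^ 2 + v) * Complex.exp (s * m + v * s ^ 2 / 2) := by
  have hderiv := hasDerivAt_integral_pow_mul_exp (X := id) (μ := gaussianReal m v) (z := s)
    (by simp) 1
  simp only [id_eq, pow_one, integral_mul_cexp_gaussianReal] at hderiv
  have hmean : HasDerivAt (fun s : ℂ => (m + v * s : ℂ)) v s := by
    simpa using ((hasDerivAt_id s).const_mul (v : ℂ)).const_add (m : ℂ)
  rw [hderiv.unique (hmean.mul (hasDerivAt_cexp_linear_add_quadratic s m v))]
  ring

lemma integral_affine_mul_affine_mul_cexp_gaussianReal (a b c d : ℂ) :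
    ∫ x : ℝ, (a + b * x) * (c + d * x) * Complex.exp (s * x) ∂gaussianReal m v =
      ((a + b * (m + v * s)) * (c + d * (m + v * s)) + b * d * v) *
        Complex.exp (s * m + v * s ^ 2 / 2) := by
  have hexpand (x : ℝ) : (a + b * x) * (c + d * x) * Complex.exp (s * x) =
      a * c * Complex.exp (s * x) + (a * d + b * c) * (x * Complex.exp (s * x)) +
        b * d * (x ^ 2 * Complex.exp (s * x)) := by
    ring
  have hint₀ : Integrable (fun x : ℝ => Complex.exp (s * x)) (gaussianReal m v) := by
    simpa using integrable_pow_mul_cexp_gaussianReal m v s 0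
  have hint₁ : Integrable (fun x : ℝ => (x : ℂ) * Complex.exp (s * x)) (gaussianReal m v) := by
    simpa using integrable_pow_mul_cexp_gaussianReal m v s 1
  have hint₂ := integrable_pow_mul_cexp_gaussianReal m v s 2
  simp_rw [hexpand]
  rw [integral_add ((hint₀.const_mul _).fun_add (hint₁.const_mul _)) (hint₂.const_mul _),
    integral_add (hint₀.const_mul _) (hint₁.const_mul _)]
  simp_rw [integral_const_mul, integral_cexp_gaussianReal, integral_mul_cexp_gaussianReal,
    integral_sq_mul_cexp_gaussianReal]
  ring

end GaussianMoments

section Wigner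

open ProbabilityTheory

variable {h : ℝ}

lemma gaussianPDFReal_zero_half_toNNReal (hh : 0 ≤ h) (t : ℝ) :
    gaussianPDFReal 0 (h / 2).toNNReal t = (π * h) ^ (-(1 : ℝ) / 2) * Real.exp (-t ^ 2 / h) := by
  have hvar : 2 * (h / 2) = h := by ring
  rw [gaussianPDFReal, Real.coe_toNNReal _ (by positivity), mul_right_comm, hvar, mul_comm h,
    sub_zero, neg_div 2 (1 : ℝ), Real.rpow_neg (by positivity), ← Real.sqrt_eq_rpow]

lemma wigner1_eq_integral_gaussianReal (hh : 0 < h) (f g : ℝ → ℂ) (z ζ : ℝ) :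
    wigner1 h f g z ζ = Complex.exp (ζ ^ 2 / h) *
      ∫ t : ℝ, f (z + t) * (starRingEnd ℂ) (g (z - t)) *
        Complex.exp (-2 * Complex.I * ζ / h * t) ∂gaussianReal 0 (h / 2).toNNReal := by
  rw [wigner1, integral_gaussianReal_eq_integral_smul (by simpa using hh)]
  push_cast
  congr 2 with t
  rw [gaussianPDFReal_zero_half_toNNReal hh.le, Complex.real_smul, mul_div_right_comm]
  push_cast
  ring

lemma wigner1_affine (hh : 0 < h) (a b c d : ℂ) (z ζ : ℝ) :
    wigner1 h (fun t => a + b * t) (fun t => c + d * t) z ζ =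
      (a + b * (z - Complex.I * ζ)) * (starRingEnd ℂ) (c + d * (z - Complex.I * ζ)) -
        b * (starRingEnd ℂ) d * (h / 2) := by
  have hne : (h : ℂ) ≠ 0 := Complex.ofReal_ne_zero.mpr hh.ne'
  set s : ℂ := -2 * Complex.I * ζ / h with hs
  have hmean : (h / 2 : ℂ) * s = -(Complex.I * ζ) := by
    rw [hs]
    field_simp
  have hcancel : Complex.exp (ζ ^ 2 / h) * Complex.exp (h / 2 * s ^ 2 / 2) = 1 := by
    rw [← Complex.exp_add, Complex.exp_eq_one_iff]
    refine ⟨0, ?_⟩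
    rw [hs]
    field_simp
    linear_combination (ζ : ℂ) ^ 2 * Complex.I_sq
  have hcentre (t : ℝ) :
      (a + b * (z + t : ℝ)) * (starRingEnd ℂ) (c + d * (z - t : ℝ)) * Complex.exp (s * t) =
        (a + b * z + b * t) *
          (starRingEnd ℂ (c + d * z) + -starRingEnd ℂ d * t) * Complex.exp (s * t) := by
    simp only [map_add, map_mul, Complex.conj_ofReal]
    push_cast
    ring
  rw [wigner1_eq_integral_gaussianReal hh, ← hs]
  simp_rw [hcentre]
  rw [integral_affine_mul_affine_mul_cexp_gaussianReal, Real.coe_toNNReal _ (by positivity)]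
  push_cast
  rw [hmean, mul_zero, zero_add, zero_add, mul_left_comm, hcancel]
  simp only [map_add, map_sub, map_mul, Complex.conj_ofReal, Complex.conj_I]
  ring

end Wigner

section Hermite

variable {h : ℝ}

lemma iteratedDeriv_exp_neg_sq_div_two (n : ℕ) (y : ℝ) :
    iteratedDeriv n (fun t : ℝ => Real.exp (-(t ^ 2 / 2))) y =
      (-1) ^ n * Polynomial.aeval y (Polynomial.hermite n) * Real.exp (-(y ^ 2 / 2)) := by
  rw [iteratedDeriv_eq_iterate, Polynomial.deriv_gaussian_eq_hermite_mul_gaussian]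

lemma iteratedDeriv_exp_neg_sq_div (hh : 0 ≤ h) (n : ℕ) (x : ℝ) :
    iteratedDeriv n (fun t : ℝ => Real.exp (-t ^ 2 / h)) x =
      √(2 / h) ^ n * ((-1) ^ n * Polynomial.aeval (√(2 / h) * x) (Polynomial.hermite n) *
        Real.exp (-x ^ 2 / h)) := by
  have hscale (t : ℝ) : -t ^ 2 / h = -((√(2 / h) * t) ^ 2 / 2) := by
    rw [mul_pow, Real.sq_sqrt (by positivity)]
    ring
  simp_rw [hscale]
  rw [iteratedDeriv_comp_const_mul (f := fun t : ℝ => Real.exp (-(t ^ 2 / 2))) (by fun_prop)]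
  simp only [iteratedDeriv_exp_neg_sq_div_two]

lemma psi_eq_aeval_hermite (hh : 0 < h) (j : ℕ) (x : ℝ) :
    psi h j x = Polynomial.aeval (√(2 / h) * x) (Polynomial.hermite j) / √(j.factorial) := by
  have hsign : (-1 : ℝ) ^ j * (-1) ^ j = 1 := by rw [← mul_pow]; norm_num
  have hexp : Real.exp (x ^ 2 / h) * Real.exp (-x ^ 2 / h) = 1 := by
    rw [← Real.exp_add, neg_div, add_neg_cancel, Real.exp_zero]
  have hscale : (h / 2) ^ ((j : ℝ) / 2) * √(2 / h) ^ j = 1 := by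
    rw [Real.rpow_div_two_eq_sqrt _ (by positivity), Real.rpow_natCast, ← mul_pow,
      ← Real.sqrt_mul (by positivity), div_mul_div_cancel₀ two_ne_zero, div_self hh.ne',
      Real.sqrt_one, one_pow]
  rw [psi, iteratedDeriv_exp_neg_sq_div hh.le]
  calc
    _ = ((-1 : ℝ) ^ j * (-1) ^ j) * ((h / 2) ^ ((j : ℝ) / 2) * √(2 / h) ^ j) *
        (Real.exp (x ^ 2 / h) * Real.exp (-x ^ 2 / h)) *
        (Polynomial.aeval (√(2 / h) * x) (Polynomial.hermite j) / √(j.factorial)) := by ring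
    _ = _ := by rw [hsign, hscale, hexp, one_mul, one_mul, one_mul]

lemma psi_zero (h x : ℝ) : psi h 0 x = 1 := by
  simp [psi, ← Real.exp_add, neg_div]

lemma psi_one (hh : 0 < h) (x : ℝ) : psi h 1 x = √(2 / h) * x := by
  simp [psi_eq_aeval_hermite hh]

end Hermite

/-- The Wigner functions of the first Hermite functions. -/
theorem wigner_first_hermite (h : ℝ) (hh : 0 < h) (x ξ : ℝ) :
    wigner1 h (fun t => (psi h 0 t : ℂ)) (fun t => (psi h 0 t : ℂ)) x ξ = 1 ∧
    wigner1 h (fun t => (psi h 0 t : ℂ)) (fun t => (psi h 1 t : ℂ)) x ξ =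
      (Real.sqrt (2 / h) : ℂ) * ((x : ℂ) + Complex.I * (ξ : ℂ)) ∧
    wigner1 h (fun t => (psi h 1 t : ℂ)) (fun t => (psi h 1 t : ℂ)) x ξ =
      -1 + ((2 / h : ℝ) : ℂ) * ((x : ℂ) ^ 2 + (ξ : ℂ) ^ 2) := by
  have hψ₀ : (fun t : ℝ => (psi h 0 t : ℂ)) = fun t : ℝ => 1 + 0 * (t : ℂ) := by
    simp [psi_zero]
  have hψ₁ : (fun t : ℝ => (psi h 1 t : ℂ)) = fun t : ℝ => 0 + (√(2 / h) : ℂ) * (t : ℂ) := by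
    simp [psi_one hh]
  have hsq : (√(2 / h) : ℂ) ^ 2 = ((2 / h : ℝ) : ℂ) := by
    rw [← Complex.ofReal_pow, Real.sq_sqrt (by positivity)]
  have hnorm : ((2 / h : ℝ) : ℂ) * (h / 2) = 1 := by
    have hne : (h : ℂ) ≠ 0 := Complex.ofReal_ne_zero.mpr hh.ne'
    push_cast
    field_simp
  rw [hψ₀, hψ₁]
  simp only [wigner1_affine hh, map_add, map_sub, map_mul, map_one, map_zero, Complex.conj_ofReal,
    Complex.conj_I]
  refine ⟨by ring, by ring, ?_⟩
  linear_combination (x ^ 2 + ξ ^ 2 - h / 2 : ℂ) * hsq - hnorm -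
    (√(2 / h) : ℂ) ^ 2 * ξ ^ 2 * Complex.I_sq
end

section
/- Fix h > 0. For all integers j, k ≥ 0 and all real x, ξ: if j ≤ k then W_{h,ℝ}(ψ_j,ψ_k)(x,ξ) = √(j!/k!)·(x+iξ)^{k−j}·(−1)^j·(2/h)^{(k−j)/2}·L_j^{(k−j)}((2/h)(x²+ξ²)), and if j ≥ k then W_{h,ℝ}(ψ_j,ψ_k)(x,ξ) = √(k!/j!)·(x−iξ)^{j−k}·(−1)^k·(2/h)^{(j−k)/2}·L_k^{(j−k)}((2/h)(x²+ξ²)). -/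
open Real MeasureTheory

/-- Generalized Laguerre polynomial
`L_k^{(α)}(x) = Σ_{m=0}^{k} ((k+α)!/((k−m)!(α+m)!))·(−x)^m/m!`. -/
noncomputable def laguerre (k α : ℕ) (x : ℝ) : ℝ :=
  ∑ m ∈ Finset.range (k + 1),
    ((Nat.factorial (k + α) : ℝ) /
      ((Nat.factorial (k - m) : ℝ) * (Nat.factorial (α + m) : ℝ))) *
      (-x) ^ m / (Nat.factorial m : ℝ)

/-!
Dilation by `√(2 / h)` reduces everything to `h = 2`, where `ψ_j` becomes `He_j / √(j!)` for the
probabilists' Hermite polynomials. The Wigner integral of `He_j`, `He_k` is then a functional `E`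
applied to `He_j(x + t) He_k(x - t)`, where `E(p) = ∫ p(t) e^{-iξt - t²/2} dt` satisfies
`E(p') = E((t + iξ) p)` by integration by parts. This relation and `He_{n+1} = t He_n - He_n'` alone
give `A(0, k) = (x + iξ)^k A(0, 0)` and `A(j + 1, k) = (x - iξ) A(j, k) - k A(j, k - 1)` for
`A(j, k) = E(He_j(x + t) He_k(x - t))`. The complex Hermite polynomials of `x - iξ` and `x + iξ`
solve this recursion, and they are Laguerre polynomials in `|x + iξ|²` up to a monomial factor.
The case `k ≤ j` follows by complex conjugation.
-/

section ComplexHermite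

open Finset
open scoped Nat

variable {R : Type*} [CommRing R]

/-- The complex (Itô) Hermite polynomial in two variables; classically `u` and `v` are `z` and
its conjugate. -/
def complexHermite (j k : ℕ) (u v : R) : R :=
  ∑ m ∈ range (j + 1), (-1) ^ m * m ! * j.choose m * k.choose m * u ^ (j - m) * v ^ (k - m)

lemma complexHermite_zero_left (k : ℕ) (u v : R) : complexHermite 0 k u v = v ^ k := by
  simp [complexHermite]

lemma mul_complexHermite (j k : ℕ) (u v : R) :
    u * complexHermite j k u v = ∑ m ∈ range (j + 2),
      (-1) ^ m * m ! * j.choose m * k.choose m * u ^ (j + 1 - m) * v ^ (k - m) := by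
  rw [sum_range_succ, Nat.choose_succ_self, complexHermite, mul_sum]
  simp only [Nat.cast_zero, mul_zero, zero_mul, add_zero]
  refine sum_congr rfl fun m hm => ?_
  rw [Nat.succ_sub (mem_range_succ_iff.1 hm), pow_succ]
  ring

lemma factorial_succ_mul_choose_succ (k m : ℕ) :
    (m + 1)! * k.choose (m + 1) = k * (m ! * (k - 1).choose m) := by
  cases k with
  | zero => simp
  | succ k =>
    rw [Nat.factorial_succ, Nat.add_sub_cancel, mul_left_comm (k + 1), Nat.add_one_mul_choose_eq]
    ring

lemma complexHermite_succ_left (j k : ℕ) (u v : R) :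
    complexHermite (j + 1) k u v =
      u * complexHermite j k u v - k * complexHermite j (k - 1) u v := by
  rw [mul_complexHermite, complexHermite, complexHermite, sum_range_succ',
    sum_range_succ' _ (j + 1), mul_sum, add_sub_right_comm, ← sum_sub_distrib]
  congr 1
  · refine sum_congr rfl fun m _ => ?_
    have hk : ((m + 1)! * k.choose (m + 1) : R) = k * (m ! * (k - 1).choose m) := by
      exact_mod_cast congrArg (Nat.cast (R := R)) (factorial_succ_mul_choose_succ k m)
    rw [Nat.choose_succ_succ, Nat.add_sub_add_right, Nat.sub_add_eq, Nat.sub_right_comm,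
      Nat.cast_add]
    linear_combination (-1) ^ (m + 1) * (j.choose m : R) * u ^ (j - m) * v ^ (k - 1 - m) * hk
  · simp

end ComplexHermite

section HermitePolynomial

open Polynomial

lemma derivative_hermite (n : ℕ) : derivative (hermite n) = (n : ℤ[X]) * hermite (n - 1) := by
  induction n with
  | zero => simp
  | succ n ih =>
    have hrec : (n : ℤ[X]) * (X * hermite (n - 1) - derivative (hermite (n - 1))) =
        (n : ℤ[X]) * hermite n := by
      cases n with
      | zero => simp
      | succ n => rw [hermite_succ n, Nat.add_sub_cancel]
    rw [hermite_succ, derivative_sub, derivative_mul, ih, derivative_natCast_mul, derivative_X,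
      Nat.add_sub_cancel, Nat.cast_succ]
    linear_combination hrec

lemma ofReal_aeval (x : ℝ) (p : ℤ[X]) : ((aeval x p : ℝ) : ℂ) = aeval (x : ℂ) p :=
  (aeval_algebraMap_apply ℂ x p).symm

variable {R : Type*} [CommRing R]

lemma eval_aeval {S : Type*} [CommSemiring S] [Algebra S R] (t : R) (q : R[X]) (p : S[X]) :
    (aeval q p).eval t = aeval (q.eval t) p :=
  (aeval_algHom_apply ((aeval t : R[X] →ₐ[R] R).restrictScalars S) q p).symm

lemma derivative_aeval {S : Type*} [CommSemiring S] [Algebra S R] (p : S[X]) (q : R[X]) :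
    derivative (aeval q p) = aeval q (derivative p) * derivative q :=
  (derivative'.restrictScalars S).map_aeval p q

lemma aeval_hermite_succ_add (a : R) (n : ℕ) :
    aeval (C a + X) (hermite (n + 1)) =
      (C a + X) * aeval (C a + X) (hermite n) - derivative (aeval (C a + X) (hermite n)) := by
  simp [hermite_succ, derivative_aeval]

lemma aeval_hermite_succ_sub (a : R) (n : ℕ) :
    aeval (C a - X) (hermite (n + 1)) =
      (C a - X) * aeval (C a - X) (hermite n) + derivative (aeval (C a - X) (hermite n)) := by
  simp [hermite_succ, derivative_aeval, sub_eq_add_neg]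

lemma derivative_aeval_hermite_sub (a : R) (n : ℕ) :
    derivative (aeval (C a - X) (hermite n)) = -(n * aeval (C a - X) (hermite (n - 1))) := by
  simp [derivative_aeval, derivative_hermite]

theorem linearMap_aeval_hermite_mul {E : R[X] →ₗ[R] R} {c : R}
    (hE : ∀ p, E (derivative p) = E ((X + C c) * p)) (a : R) (j k : ℕ) :
    E (aeval (C a + X) (hermite j) * aeval (C a - X) (hermite k)) =
      complexHermite j k (a - c) (a + c) * E 1 := by
  have map_C_mul (r : R) (p : R[X]) : E (C r * p) = r * E p := by simp [C_mul']
  induction j generalizing k with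
  | zero =>
    rw [complexHermite_zero_left]
    induction k with
    | zero => simp
    | succ k ih =>
      set Q := aeval (C a - X) (hermite k)
      have expand : (1 : R[X]) * aeval (C a - X) (hermite (k + 1)) =
          C (a + c) * Q - (X + C c) * Q + derivative Q := by
        rw [aeval_hermite_succ_sub, C_add]
        ring
      simp only [hermite_zero, map_one, one_mul] at ih expand ⊢
      rw [expand, map_add, map_sub, hE, map_C_mul, ih]
      ring
  | succ j ih =>
    set P := aeval (C a + X) (hermite j)
    set Q := aeval (C a - X) (hermite k) with hQ
    have expand : aeval (C a + X) (hermite (j + 1)) * Q =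
        C (a - c) * (P * Q) + (X + C c) * (P * Q) - derivative (P * Q)
          - C (k : R) * (P * aeval (C a - X) (hermite (k - 1))) := by
      rw [aeval_hermite_succ_add, derivative_mul, hQ, derivative_aeval_hermite_sub, C_sub,
        C_eq_natCast]
      ring
    rw [expand, map_sub, map_sub, map_add, hE, map_C_mul, map_C_mul, ih, ih,
      complexHermite_succ_left]
    ring

end HermitePolynomial

section GaussianIntegral

open Polynomial
open Complex (I)
open scoped Nat

lemma pow_le_factorial_mul_exp_add_exp_neg (t : ℝ) (n : ℕ) :
    |t| ^ n ≤ n ! * (exp t + exp (-t)) := by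
  calc |t| ^ n ≤ n ! * exp |t| := by
        rw [← div_le_iff₀' (by positivity)]
        exact pow_div_factorial_le_exp _ (abs_nonneg t) n
    _ ≤ n ! * (exp t + exp (-t)) := by gcongr; exact exp_abs_le t

lemma integrable_eval_mul_cexp_quadratic {b : ℂ} (hb : b.re < 0) (c : ℂ) (p : ℂ[X]) :
    Integrable fun t : ℝ => p.eval (t : ℂ) * Complex.exp (b * t ^ 2 + c * t) := by
  induction p using Polynomial.induction_on' with
  | add p q hp hq =>
    simp only [eval_add, add_mul]
    exact hp.add hq
  | monomial n r =>
    have hnorm (c' : ℂ) : Integrable fun t : ℝ => ‖Complex.exp (b * t ^ 2 + c' * t)‖ := by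
      simpa only [add_zero] using (integrable_cexp_quadratic' hb c' 0).norm
    refine (((hnorm (c + 1)).add (hnorm (c - 1))).const_mul (‖r‖ * n !)).mono' (by fun_prop)
      (.of_forall fun t => ?_)
    have htilt (s : ℝ) : ‖Complex.exp (b * t ^ 2 + (c + s) * t)‖ =
        ‖Complex.exp (b * t ^ 2 + c * t)‖ * exp (s * t) := by
      rw [add_mul, ← add_assoc, Complex.exp_add, norm_mul, ← Complex.ofReal_mul,
        Complex.norm_exp_ofReal]
    have hplus := htilt 1
    have hminus := htilt (-1)
    simp only [Complex.ofReal_neg, Complex.ofReal_one, one_mul, neg_one_mul, ← sub_eq_add_neg]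
      at hplus hminus
    calc ‖(monomial n r).eval (t : ℂ) * Complex.exp (b * t ^ 2 + c * t)‖
        = ‖r‖ * |t| ^ n * ‖Complex.exp (b * t ^ 2 + c * t)‖ := by simp
      _ ≤ ‖r‖ * (n ! * (exp t + exp (-t))) * ‖Complex.exp (b * t ^ 2 + c * t)‖ := by
        gcongr
        exact pow_le_factorial_mul_exp_add_exp_neg t n
      _ = _ := by
        simp only [Pi.add_apply, hplus, hminus]
        ring

lemma integral_derivative_mul_cexp_quadratic {b : ℂ} (hb : b.re < 0) (c : ℂ) (p : ℂ[X]) :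
    ∫ t : ℝ, (derivative p).eval (t : ℂ) * Complex.exp (b * t ^ 2 + c * t) =
      -∫ t : ℝ, ((C (2 * b) * X + C c) * p).eval (t : ℂ) * Complex.exp (b * t ^ 2 + c * t) := by
  rw [eq_neg_iff_add_eq_zero,
    ← integral_add (integrable_eval_mul_cexp_quadratic hb c _)
      (integrable_eval_mul_cexp_quadratic hb c _)]
  refine integral_eq_zero_of_hasDerivAt_of_integrable (fun t => ?_)
    ((integrable_eval_mul_cexp_quadratic hb c _).add (integrable_eval_mul_cexp_quadratic hb c _))
    (integrable_eval_mul_cexp_quadratic hb c p)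
  have hquad : HasDerivAt (fun z : ℂ => b * z ^ 2 + c * z) (b * (2 * t) + c) (t : ℂ) := by
    simpa using ((hasDerivAt_pow 2 (t : ℂ)).const_mul b).fun_add
      ((hasDerivAt_id (t : ℂ)).const_mul c)
  refine ((p.hasDerivAt (t : ℂ)).mul hquad.cexp).comp_ofReal.congr_deriv ?_
  simp only [eval_add, eval_mul, eval_C, eval_X]
  ring

lemma re_neg_half_lt_zero : (-1 / 2 : ℂ).re < 0 := by norm_num

/-- The functional `p ↦ ∫ p(t) e^{-t²/2 - ct} dt` on polynomials: unnormalized expectation under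
the standard Gaussian with an exponential tilt. For `c = iξ` it computes Fourier transforms. -/
noncomputable def tiltedGaussian (c : ℂ) : ℂ[X] →ₗ[ℂ] ℂ where
  toFun p := ∫ t : ℝ, p.eval (t : ℂ) * Complex.exp (-1 / 2 * t ^ 2 + -c * t)
  map_add' p q := by
    simp only [eval_add, add_mul]
    exact integral_add (integrable_eval_mul_cexp_quadratic re_neg_half_lt_zero _ p)
      (integrable_eval_mul_cexp_quadratic re_neg_half_lt_zero _ q)
  map_smul' r p := by
    simp only [eval_smul, smul_eq_mul, mul_assoc, integral_const_mul, RingHom.id_apply]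

lemma tiltedGaussian_apply (c : ℂ) (p : ℂ[X]) :
    tiltedGaussian c p = ∫ t : ℝ, p.eval (t : ℂ) * Complex.exp (-1 / 2 * t ^ 2 + -c * t) :=
  rfl

lemma tiltedGaussian_derivative (c : ℂ) (p : ℂ[X]) :
    tiltedGaussian c (derivative p) = tiltedGaussian c ((X + C c) * p) := by
  have hfactor : (X + C c) * p = -((C (2 * (-1 / 2)) * X + C (-c)) * p) := by
    rw [show (2 * (-1 / 2) : ℂ) = -1 by norm_num, C_neg, C_neg, C_1]
    ring
  rw [hfactor, map_neg]
  exact integral_derivative_mul_cexp_quadratic re_neg_half_lt_zero (-c) p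

lemma tiltedGaussian_one (c : ℂ) : tiltedGaussian c 1 = √(2 * π) * Complex.exp (c ^ 2 / 2) := by
  have h := integral_cexp_quadratic re_neg_half_lt_zero (-c) 0
  simp only [add_zero] at h
  simp only [tiltedGaussian_apply, eval_one, one_mul]
  rw [h, Real.sqrt_eq_rpow, Complex.ofReal_cpow (by positivity)]
  congr 2
  · push_cast; ring
  · push_cast; ring
  · ring

end GaussianIntegral

section Laguerre

open Finset
open scoped Nat

lemma factorial_mul_choose_mul_choose (m n d : ℕ) :
    (n ! * (m + n).choose n * (m + n + d).choose n : ℂ) =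
      (m + n)! * ((m + n + d)! / (n ! * (d + m)!) / m !) := by
  rw [Nat.cast_choose ℂ (Nat.le_add_left n m),
    Nat.cast_choose ℂ ((Nat.le_add_left n m).trans (Nat.le_add_right _ d)),
    Nat.add_sub_cancel, show m + n + d - n = d + m by omega]
  have := Nat.factorial_ne_zero
  field_simp

theorem complexHermite_add_eq_laguerre (j d : ℕ) {u v : ℂ} {r : ℝ} (huv : u * v = r) :
    complexHermite j (j + d) u v = (-1) ^ j * j ! * v ^ d * laguerre j d r := by
  rw [complexHermite, laguerre, ← sum_range_reflect, Complex.ofReal_sum, mul_sum]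
  refine sum_congr rfl fun m hm => ?_
  obtain ⟨n, rfl⟩ := Nat.exists_eq_add_of_le (mem_range_succ_iff.1 hm)
  have hsign : (-1 : ℂ) ^ n = (-1) ^ (m + n) * (-1) ^ m := by
    rw [pow_add, mul_right_comm, ← mul_pow, neg_one_mul, neg_neg, one_pow, one_mul]
  rw [show m + n + 1 - 1 - m = n by omega, show m + n - n = m by omega,
    show m + n - m = n by omega, show m + n + d - n = d + m by omega, hsign]
  push_cast
  rw [← huv, neg_pow (u * v), mul_pow, pow_add v]
  linear_combination (-1) ^ (m + n) * (-1) ^ m * u ^ m * v ^ d * v ^ m *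
    factorial_mul_choose_mul_choose m n d

end Laguerre

section Wigner

open Polynomial
open Complex (I)
open scoped Nat ComplexConjugate

lemma conj_wigner1 (h : ℝ) (f g : ℝ → ℂ) (z ζ : ℝ) :
    conj (wigner1 h f g z ζ) = wigner1 h g f z ζ := by
  rw [wigner1, wigner1, map_mul, Complex.conj_ofReal, ← integral_conj, ← integral_neg_eq_self]
  congr 2 with t
  simp only [map_mul, map_div₀, map_ofNat, ← Complex.exp_conj, Complex.conj_ofReal,
    Complex.conj_I, Complex.conj_conj, Complex.ofReal_neg, neg_sq, sub_neg_eq_add,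
    ← sub_eq_add_neg, mul_neg, neg_mul, neg_neg]
  ring

lemma wigner1_const_mul (h : ℝ) (a b : ℂ) (f g : ℝ → ℂ) (z ζ : ℝ) :
    wigner1 h (fun t => a * f t) (fun t => b * g t) z ζ = a * conj b * wigner1 h f g z ζ := by
  rw [wigner1, wigner1, mul_left_comm, ← integral_const_mul (a * conj b)]
  congr 2 with t
  rw [map_mul]
  ring

lemma rpow_neg_one_div_two {x : ℝ} (hx : 0 ≤ x) : x ^ (-(1 : ℝ) / 2) = (√x)⁻¹ := by
  rw [neg_div, rpow_neg hx, ← Real.sqrt_eq_rpow]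

lemma wigner1_comp_mul_left {h c : ℝ} (hh : 0 ≤ h) (hc : 0 < c) (f g : ℝ → ℂ) (z ζ : ℝ) :
    wigner1 h (fun t => f (c * t)) (fun t => g (c * t)) z ζ =
      wigner1 (c ^ 2 * h) f g (c * z) (c * ζ) := by
  have hcancel (s : ℝ) : (c * s) ^ 2 / (c ^ 2 * h) = s ^ 2 / h := by
    rw [mul_pow, mul_div_mul_left _ _ (by positivity)]
  have hphase (t : ℝ) : -2 * I * ((c * ζ : ℝ) : ℂ) * ((c * t : ℝ) : ℂ) / ((c ^ 2 * h : ℝ) : ℂ) =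
      -2 * I * ζ * t / h := by
    have hc' : (c ^ 2 : ℂ) ≠ 0 := by exact_mod_cast (pow_pos hc 2).ne'
    push_cast
    rw [← mul_div_mul_left (-2 * I * ζ * t) (h : ℂ) hc']
    ring
  have hnormalize : (π * h) ^ (-(1 : ℝ) / 2) = c * (π * (c ^ 2 * h)) ^ (-(1 : ℝ) / 2) := by
    rw [rpow_neg_one_div_two (by positivity), rpow_neg_one_div_two (by positivity),
      mul_left_comm, Real.sqrt_mul (sq_nonneg c), Real.sqrt_sq hc.le, mul_inv,
      mul_inv_cancel_left₀ hc.ne']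
  have hsubst (G : ℝ → ℂ) : ∫ s, G s = ∫ t, c * G (c * t) := by
    rw [integral_const_mul, Measure.integral_comp_mul_left, abs_of_pos (inv_pos.2 hc),
      Complex.real_smul, Complex.ofReal_inv, mul_inv_cancel_left₀ (by exact_mod_cast hc.ne')]
  rw [wigner1, wigner1, hcancel]
  congr 1
  refine Eq.trans ?_ (hsubst _).symm
  congr 1 with t
  rw [hphase, hnormalize, neg_div (c ^ 2 * h), hcancel, ← neg_div, mul_add, mul_sub,
    Complex.ofReal_mul]
  ring

lemma wigner1_two_aeval (p q : ℤ[X]) (z ζ : ℝ) :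
    wigner1 2 (fun t => (aeval t p : ℝ)) (fun t => (aeval t q : ℝ)) z ζ =
      exp (ζ ^ 2 / 2) * ((√(2 * π) : ℂ)⁻¹ *
        tiltedGaussian (I * ζ) (aeval (C (z : ℂ) + X) p * aeval (C (z : ℂ) - X) q)) := by
  rw [wigner1, tiltedGaussian_apply, ← integral_const_mul (√(2 * π) : ℂ)⁻¹]
  congr 2 with t
  have hweight : Complex.exp (-1 / 2 * t ^ 2 + -(I * ζ) * t) =
      Complex.exp (-2 * I * ζ * t / (2 : ℝ)) * (exp (-t ^ 2 / 2) : ℂ) := by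
    rw [Complex.ofReal_exp, ← Complex.exp_add]
    congr 1
    push_cast
    ring
  rw [hweight, rpow_neg_one_div_two (by positivity), mul_comm π, Complex.conj_ofReal, eval_mul,
    eval_aeval, eval_aeval, ofReal_aeval, ofReal_aeval]
  simp only [eval_add, eval_sub, eval_C, eval_X, Complex.ofReal_add, Complex.ofReal_sub,
    Complex.ofReal_inv]
  ring

theorem wigner1_two_hermite (j k : ℕ) (z ζ : ℝ) :
    wigner1 2 (fun t => (aeval t (hermite j) : ℝ)) (fun t => (aeval t (hermite k) : ℝ)) z ζ =
      complexHermite j k (z - I * ζ) (z + I * ζ) := by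
  have hexp : (exp (ζ ^ 2 / 2) : ℂ) * Complex.exp ((I * ζ) ^ 2 / 2) = 1 := by
    rw [Complex.ofReal_exp, ← Complex.exp_add, mul_pow, Complex.I_sq, Complex.exp_eq_one_iff]
    exact ⟨0, by push_cast; ring⟩
  have hsqrt : (√(2 * π) : ℂ)⁻¹ * √(2 * π) = 1 :=
    inv_mul_cancel₀ (by exact_mod_cast (Real.sqrt_pos.2 two_pi_pos).ne')
  rw [wigner1_two_aeval, linearMap_aeval_hermite_mul (tiltedGaussian_derivative _),
    tiltedGaussian_one]
  linear_combination complexHermite j k (z - I * ζ : ℂ) (z + I * ζ) *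
    (exp (ζ ^ 2 / 2) * Complex.exp ((I * ζ) ^ 2 / 2) * hsqrt + hexp)

lemma psi_eq_hermite {h : ℝ} (hh : 0 < h) (n : ℕ) (x : ℝ) :
    psi h n x = (√(n ! : ℝ))⁻¹ * aeval (√(2 / h) * x) (hermite n) := by
  have hsq (t : ℝ) : t ^ 2 / h = (√(2 / h) * t) ^ 2 / 2 := by
    rw [mul_pow, Real.sq_sqrt (by positivity)]
    field_simp
  have hscale : (h / 2) ^ ((n : ℝ) / 2) * √(2 / h) ^ n = 1 := by
    rw [rpow_div_two_eq_sqrt _ (by positivity), rpow_natCast, ← mul_pow,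
      ← Real.sqrt_mul (by positivity), div_mul_div_comm, mul_comm h, div_self (by positivity),
      Real.sqrt_one, one_pow]
  have hderiv : iteratedDeriv n (fun t => exp (-t ^ 2 / h)) x =
      √(2 / h) ^ n * deriv^[n] (fun y => exp (-(y ^ 2 / 2))) (√(2 / h) * x) := by
    simp only [neg_div, hsq]
    rw [iteratedDeriv_comp_const_mul (f := fun y => exp (-(y ^ 2 / 2))) (by fun_prop),
      iteratedDeriv_eq_iterate]
  rw [psi, hderiv, hermite_eq_deriv_gaussian', hsq]
  linear_combination (-1) ^ n / √(n ! : ℝ) * exp ((√(2 / h) * x) ^ 2 / 2) *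
    deriv^[n] (fun y => exp (-(y ^ 2 / 2))) (√(2 / h) * x) * hscale

theorem wigner1_psi {h : ℝ} (hh : 0 < h) (j k : ℕ) (x ξ : ℝ) :
    wigner1 h (fun t => (psi h j t : ℂ)) (fun t => (psi h k t : ℂ)) x ξ =
      (√(j ! : ℝ))⁻¹ * (√(k ! : ℝ))⁻¹ *
        complexHermite j k (√(2 / h) * (x - I * ξ)) (√(2 / h) * (x + I * ξ)) := by
  have hscale : √(2 / h) ^ 2 * h = 2 := by
    rw [Real.sq_sqrt (by positivity), div_mul_cancel₀ _ hh.ne']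
  simp only [psi_eq_hermite hh, Complex.ofReal_mul]
  rw [wigner1_const_mul,
    wigner1_comp_mul_left hh.le (Real.sqrt_pos.2 (by positivity))
      (fun t => (aeval t (hermite j) : ℝ)) (fun t => (aeval t (hermite k) : ℝ)),
    hscale, wigner1_two_hermite, Complex.conj_ofReal, Complex.ofReal_mul, Complex.ofReal_mul,
    mul_left_comm I, ← mul_sub, ← mul_add, Complex.ofReal_inv, Complex.ofReal_inv]

theorem wigner1_psi_add {h : ℝ} (hh : 0 < h) (j d : ℕ) (x ξ : ℝ) :
    wigner1 h (fun t => (psi h j t : ℂ)) (fun t => (psi h (j + d) t : ℂ)) x ξ =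
      √(j ! / (j + d)! : ℝ) * (x + I * ξ) ^ d * (-1) ^ j * ((2 / h) ^ ((d : ℝ) / 2) : ℝ) *
        laguerre j d (2 / h * (x ^ 2 + ξ ^ 2)) := by
  have harg : (√(2 / h) * (x - I * ξ) : ℂ) * (√(2 / h) * (x + I * ξ)) =
      (2 / h * (x ^ 2 + ξ ^ 2) : ℝ) := by
    have hsqC : (√(2 / h) : ℂ) ^ 2 = (2 / h : ℝ) := by
      rw [← Complex.ofReal_pow, Real.sq_sqrt (by positivity)]
    rw [Complex.ofReal_mul, ← hsqC]
    push_cast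
    linear_combination -(√(2 / h) : ℂ) ^ 2 * ξ ^ 2 * Complex.I_sq
  have hfactorial : (√(j ! : ℝ))⁻¹ * (√((j + d)! : ℝ))⁻¹ * j ! = √(j ! / (j + d)! : ℝ) := by
    rw [Real.sqrt_div (by positivity), mul_right_comm, inv_mul_eq_div, Real.div_sqrt,
      div_eq_mul_inv]
  rw [wigner1_psi hh, complexHermite_add_eq_laguerre j d harg, ← hfactorial,
    rpow_div_two_eq_sqrt _ (by positivity), rpow_natCast, mul_pow]
  push_cast
  ring

end Wigner

/-- The Wigner functions of pairs of Hermite functions, expressed with Laguerre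
polynomials. -/
theorem wigner_hermite_laguerre (h : ℝ) (hh : 0 < h) (j k : ℕ) (x ξ : ℝ) :
    (j ≤ k →
      wigner1 h (fun t => (psi h j t : ℂ)) (fun t => (psi h k t : ℂ)) x ξ =
        (Real.sqrt ((Nat.factorial j : ℝ) / (Nat.factorial k : ℝ)) : ℂ) *
          ((x : ℂ) + Complex.I * (ξ : ℂ)) ^ (k - j) * (-1 : ℂ) ^ j *
          (((2 / h) ^ (((k : ℝ) - (j : ℝ)) / 2) : ℝ) : ℂ) *
          ((laguerre j (k - j) ((2 / h) * (x ^ 2 + ξ ^ 2)) : ℝ) : ℂ)) ∧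
    (k ≤ j →
      wigner1 h (fun t => (psi h j t : ℂ)) (fun t => (psi h k t : ℂ)) x ξ =
        (Real.sqrt ((Nat.factorial k : ℝ) / (Nat.factorial j : ℝ)) : ℂ) *
          ((x : ℂ) - Complex.I * (ξ : ℂ)) ^ (j - k) * (-1 : ℂ) ^ k *
          (((2 / h) ^ (((j : ℝ) - (k : ℝ)) / 2) : ℝ) : ℂ) *
          ((laguerre k (j - k) ((2 / h) * (x ^ 2 + ξ ^ 2)) : ℝ) : ℂ)) := by
  constructor
  · intro hjk
    obtain ⟨d, rfl⟩ := Nat.exists_eq_add_of_le hjk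
    rw [wigner1_psi_add hh, Nat.add_sub_cancel_left, Nat.cast_add, add_sub_cancel_left]
  · intro hkj
    obtain ⟨d, rfl⟩ := Nat.exists_eq_add_of_le hkj
    rw [← conj_wigner1, wigner1_psi_add hh, Nat.add_sub_cancel_left, Nat.cast_add,
      add_sub_cancel_left]
    simp only [map_mul, map_pow, map_add, map_neg, map_one, Complex.conj_ofReal, Complex.conj_I,
      neg_mul, ← sub_eq_add_neg]
end

section
/- Fix h > 0. Let P : ℝ → ℝ be a C¹ function such that P and P′ are at most polynomially increasing. Let s ∈ ℕ, n ∈ ℕ*, and ε = 1 or −1. Let F : ℝ² → ℝ be a C^n function which, together with all its partial derivatives of order ≤ n, is at most polynomially increasing. Then (−s·i·ε)^n ∫_{ℝ²} F(x,ξ)·(x+iεξ)^s·P(x²+ξ²)·e^{−(x²+ξ²)/h} dx dξ = ∫_{ℝ²} ([x∂_ξ − ξ∂_x]^n F)(x,ξ)·(x+iεξ)^s·P(x²+ξ²)·e^{−(x²+ξ²)/h} dx dξ. -/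
open Real MeasureTheory

/-- The first-order differential operator `[x∂_ξ − ξ∂_x]` acting on functions on `ℝ²`. -/
noncomputable def rotOp (F : ℝ × ℝ → ℝ) : ℝ × ℝ → ℝ := fun p =>
  p.1 * fderiv ℝ F p (0, 1) - p.2 * fderiv ℝ F p (1, 0)

/-!
In polar coordinates `rotOp` is `∂/∂θ`. The weight `W(x, ξ) = (x + iεξ)^s w(x² + ξ²)` satisfies
`∂W/∂θ = isε W`, so `(rotOp F) W + isε F W = ∂(F W)/∂θ` integrates to zero over every circle, hence
over the plane. This is the case `n = 1`, and the general case follows by iterating it. Radial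
factors of the weight are never differentiated.
-/

section PolynomialGrowth

variable {D E G A : Type*} [NormedAddCommGroup D] [NormedAddCommGroup E] [NormedAddCommGroup G]
  [NormedRing A]

/-- At most polynomial growth of a function between normed groups. The bound is required on the
whole space, not just near infinity, so `f` is in particular bounded on bounded sets. -/
def HasPolynomialGrowth (f : E → G) : Prop :=
  ∃ (C : ℝ) (m : ℕ), ∀ x, ‖f x‖ ≤ C * (1 + ‖x‖) ^ m

namespace HasPolynomialGrowth

lemma exists_nonneg {f : E → G} (hf : HasPolynomialGrowth f) :
    ∃ (C : ℝ) (m : ℕ), 0 ≤ C ∧ ∀ x, ‖f x‖ ≤ C * (1 + ‖x‖) ^ m := by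
  obtain ⟨C, m, hC⟩ := hf
  exact ⟨C, m, by simpa using (norm_nonneg _).trans (hC 0), hC⟩

lemma of_norm_le {f : E → G} {g : E → D} (hf : HasPolynomialGrowth f)
    (hgf : ∀ x, ‖g x‖ ≤ ‖f x‖) : HasPolynomialGrowth g := by
  obtain ⟨C, m, hC⟩ := hf
  exact ⟨C, m, fun x => (hgf x).trans (hC x)⟩

lemma norm {f : E → G} (hf : HasPolynomialGrowth f) : HasPolynomialGrowth fun x => ‖f x‖ :=
  hf.of_norm_le fun x => (norm_norm (f x)).le

lemma ofReal {f : E → ℝ} (hf : HasPolynomialGrowth f) :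
    HasPolynomialGrowth fun x => (f x : ℂ) :=
  hf.of_norm_le fun x => (Complex.norm_real (f x)).le

lemma const (c : G) : HasPolynomialGrowth fun _ : E => c :=
  ⟨‖c‖, 0, fun x => by simp⟩

lemma fst : HasPolynomialGrowth fun x : D × E => x.1 :=
  ⟨1, 1, fun x => by linarith [norm_fst_le x]⟩

lemma snd : HasPolynomialGrowth fun x : D × E => x.2 :=
  ⟨1, 1, fun x => by linarith [norm_snd_le x]⟩

lemma add {f g : E → G} (hf : HasPolynomialGrowth f) (hg : HasPolynomialGrowth g) :
    HasPolynomialGrowth fun x => f x + g x := by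
  obtain ⟨C, m, hC, hf⟩ := hf.exists_nonneg
  obtain ⟨C', m', hC', hg⟩ := hg.exists_nonneg
  refine ⟨C + C', max m m', fun x => ?_⟩
  have one_le : 1 ≤ 1 + ‖x‖ := le_add_of_nonneg_right (norm_nonneg x)
  calc ‖f x + g x‖ ≤ C * (1 + ‖x‖) ^ m + C' * (1 + ‖x‖) ^ m' := norm_add_le_of_le (hf x) (hg x)
    _ ≤ C * (1 + ‖x‖) ^ max m m' + C' * (1 + ‖x‖) ^ max m m' := by
      gcongr <;> first | exact one_le | simp
    _ = (C + C') * (1 + ‖x‖) ^ max m m' := by ring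

lemma sum {ι : Type*} {s : Finset ι} {f : ι → E → G} (hf : ∀ i ∈ s, HasPolynomialGrowth (f i)) :
    HasPolynomialGrowth fun x => ∑ i ∈ s, f i x := by
  rw [← Finset.sum_fn]
  exact Finset.sum_induction f HasPolynomialGrowth (fun _ _ => add) (const 0) hf

lemma mul {f g : E → A} (hf : HasPolynomialGrowth f) (hg : HasPolynomialGrowth g) :
    HasPolynomialGrowth fun x => f x * g x := by
  obtain ⟨C, m, hC, hf⟩ := hf.exists_nonneg
  obtain ⟨C', m', hg⟩ := hg
  refine ⟨C * C', m + m', fun x => ?_⟩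
  calc ‖f x * g x‖ ≤ ‖f x‖ * ‖g x‖ := norm_mul_le _ _
    _ ≤ (C * (1 + ‖x‖) ^ m) * (C' * (1 + ‖x‖) ^ m') := by gcongr <;> simp only [hf, hg]
    _ = C * C' * (1 + ‖x‖) ^ (m + m') := by ring

lemma pow {f : E → A} (hf : HasPolynomialGrowth f) (k : ℕ) :
    HasPolynomialGrowth fun x => f x ^ k := by
  induction k with
  | zero => simpa only [pow_zero] using const 1
  | succ k ih => simpa only [pow_succ] using ih.mul hf

lemma comp {g : E → G} {f : D → E} (hg : HasPolynomialGrowth g) (hf : HasPolynomialGrowth f) :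
    HasPolynomialGrowth fun x => g (f x) := by
  obtain ⟨C, m, hC, hg⟩ := hg.exists_nonneg
  obtain ⟨C', m', hf⟩ := (const (1 : ℝ)).add hf.norm
  refine ⟨C * C' ^ m, m' * m, fun x => ?_⟩
  have one_add_le : 1 + ‖f x‖ ≤ C' * (1 + ‖x‖) ^ m' := (le_norm_self _).trans (hf x)
  calc ‖g (f x)‖ ≤ C * (1 + ‖f x‖) ^ m := hg (f x)
    _ ≤ C * (C' * (1 + ‖x‖) ^ m') ^ m := by gcongr
    _ = C * C' ^ m * (1 + ‖x‖) ^ (m' * m) := by rw [mul_pow, ← pow_mul, mul_assoc]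

end HasPolynomialGrowth

end PolynomialGrowth

section TemperateGrowthUpTo

variable {E G : Type*} [NormedAddCommGroup E] [NormedSpace ℝ E] [NormedAddCommGroup G]
  [NormedSpace ℝ G]

/-- The `C^n` analogue of `Function.HasTemperateGrowth`: all derivatives of order at most `n` grow
at most polynomially. -/
def HasTemperateGrowthUpTo (n : ℕ) (f : E → G) : Prop :=
  ContDiff ℝ n f ∧ ∀ k ≤ n, HasPolynomialGrowth (iteratedFDeriv ℝ k f)

namespace HasTemperateGrowthUpTo

lemma of_hasTemperateGrowth {f : E → G} (hf : f.HasTemperateGrowth) (n : ℕ) :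
    HasTemperateGrowthUpTo n f := by
  refine ⟨hf.1.of_le (mod_cast le_top), fun k _ => ?_⟩
  obtain ⟨m, C, hC⟩ := hf.2 k
  exact ⟨C, m, hC⟩

lemma hasPolynomialGrowth {n : ℕ} {f : E → G} (hf : HasTemperateGrowthUpTo n f) :
    HasPolynomialGrowth f :=
  (hf.2 0 n.zero_le).of_norm_le fun _ => norm_iteratedFDeriv_zero.ge

lemma fderiv_apply {n : ℕ} {f : E → G} {V : E → E} (hf : HasTemperateGrowthUpTo (n + 1) f)
    (hV : HasTemperateGrowthUpTo n V) : HasTemperateGrowthUpTo n fun x => fderiv ℝ f x (V x) := by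
  have contDiff_fderiv : ContDiff ℝ n (fderiv ℝ f) := hf.1.fderiv_right (by norm_cast)
  refine ⟨contDiff_fderiv.clm_apply hV.1, fun k hk => ?_⟩
  have leibniz_bound : HasPolynomialGrowth fun x => ∑ i ∈ Finset.range (k + 1),
      (k.choose i : ℝ) * ‖iteratedFDeriv ℝ i (fderiv ℝ f) x‖ * ‖iteratedFDeriv ℝ (k - i) V x‖ := by
    refine .sum fun i hi => ?_
    have hik : i ≤ k := Finset.mem_range_succ_iff.mp hi
    simp only [norm_iteratedFDeriv_fderiv]
    exact ((HasPolynomialGrowth.const _).mul (hf.2 (i + 1) (by lia)).norm).mul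
      (hV.2 (k - i) (by lia)).norm
  exact leibniz_bound.of_norm_le fun x =>
    (norm_iteratedFDeriv_clm_apply contDiff_fderiv hV.1 x (mod_cast hk)).trans (le_norm_self _)

end HasTemperateGrowthUpTo

end TemperateGrowthUpTo

section Rotation

lemma rotOp_apply_eq_fderiv (F : ℝ × ℝ → ℝ) (p : ℝ × ℝ) :
    rotOp F p = fderiv ℝ F p (-p.2, p.1) := by
  have rotated : ((-p.2, p.1) : ℝ × ℝ) = p.1 • (0, 1) - p.2 • (1, 0) := by simp
  rw [rotated, map_sub, map_smul, map_smul, rotOp, smul_eq_mul, smul_eq_mul]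

lemma contDiff_rotOp {n : ℕ} {F : ℝ × ℝ → ℝ} (hF : ContDiff ℝ (n + 1) F) :
    ContDiff ℝ n (rotOp F) := by
  have contDiff_fderiv : ContDiff ℝ n (fderiv ℝ F) := hF.fderiv_right le_rfl
  have contDiff_partial (v : ℝ × ℝ) : ContDiff ℝ n fun p => fderiv ℝ F p v :=
    contDiff_fderiv.clm_apply contDiff_const
  exact (contDiff_fst.mul (contDiff_partial (0, 1))).sub
    (contDiff_snd.mul (contDiff_partial (1, 0)))

lemma HasTemperateGrowthUpTo.rotOp {n : ℕ} {F : ℝ × ℝ → ℝ}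
    (hF : HasTemperateGrowthUpTo (n + 1) F) : HasTemperateGrowthUpTo n (rotOp F) := by
  let J : ℝ × ℝ →L[ℝ] ℝ × ℝ :=
    (-ContinuousLinearMap.snd ℝ ℝ ℝ).prod (ContinuousLinearMap.fst ℝ ℝ ℝ)
  rw [funext (rotOp_apply_eq_fderiv F)]
  exact hF.fderiv_apply (.of_hasTemperateGrowth J.hasTemperateGrowth n)

lemma HasTemperateGrowthUpTo.iterate_rotOp {m k : ℕ} {F : ℝ × ℝ → ℝ}
    (hF : HasTemperateGrowthUpTo (m + k) F) : HasTemperateGrowthUpTo m (_root_.rotOp^[k] F) := by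
  induction k generalizing F with
  | zero => exact hF
  | succ k ih => exact ih hF.rotOp

lemma hasDerivAt_comp_polarCoord_symm {F : ℝ × ℝ → ℝ} (hF : Differentiable ℝ F) (r θ : ℝ) :
    HasDerivAt (fun t => F (polarCoord.symm (r, t))) (rotOp F (polarCoord.symm (r, θ))) θ := by
  have hasDerivAt_circle : HasDerivAt (fun t => polarCoord.symm (r, t))
      (-(r * sin θ), r * cos θ) θ := by
    simpa using ((hasDerivAt_cos θ).const_mul r).prodMk ((hasDerivAt_sin θ).const_mul r)
  rw [rotOp_apply_eq_fderiv]
  exact (hF _).hasFDerivAt.comp_hasDerivAt θ hasDerivAt_circle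

lemma integral_eq_zero_of_forall_circle {E : Type*} [NormedAddCommGroup E] [NormedSpace ℝ E]
    {g : ℝ × ℝ → E} (hg : ∀ r > 0, ∫ θ in -π..π, g (polarCoord.symm (r, θ)) = 0) :
    ∫ p, g p = 0 := by
  rw [← integral_comp_polarCoord_symm, polarCoord_target]
  by_cases hint : IntegrableOn (fun p : ℝ × ℝ => p.1 • g (polarCoord.symm p))
      (Set.Ioi 0 ×ˢ Set.Ioo (-π) π)
  · rw [Measure.volume_eq_prod, setIntegral_prod _ hint]
    refine setIntegral_eq_zero_of_forall_eq_zero fun r hr => ?_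
    rw [integral_smul, ← integral_Ioc_eq_integral_Ioo,
      ← intervalIntegral.integral_of_le (by linarith [pi_pos]), hg r hr, smul_zero]
  · -- Otherwise the integral over the plane is `0` by convention.
    exact integral_undef hint

/-- `W` is an eigenfunction of the angular derivative `∂/∂θ` with eigenvalue `c`. No regularity in
the radial direction is asked for, so this is not expressed through `rotOp`. -/
def IsAngularEigenfunction (c : ℂ) (W : ℝ × ℝ → ℂ) : Prop :=
  ∀ r > 0, ∀ θ, HasDerivAt (fun t => W (polarCoord.symm (r, t)))
    (c * W (polarCoord.symm (r, θ))) θ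

namespace IsAngularEigenfunction

lemma add_I_mul {ε : ℂ} (hε : ε ^ 2 = 1) :
    IsAngularEigenfunction (Complex.I * ε) fun p => p.1 + Complex.I * ε * p.2 := by
  intro r _ θ
  have hcos := ((hasDerivAt_cos θ).const_mul r).ofReal_comp
  have hsin := ((hasDerivAt_sin θ).const_mul r).ofReal_comp
  refine (hcos.add (hsin.const_mul (Complex.I * ε))).congr_deriv ?_
  simp only [polarCoord_symm_apply]
  push_cast
  linear_combination -(r * Complex.sin θ * ε ^ 2) * Complex.I_sq + r * Complex.sin θ * hε

lemma pow {c : ℂ} {W : ℝ × ℝ → ℂ} (hW : IsAngularEigenfunction c W) (s : ℕ) :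
    IsAngularEigenfunction (s * c) fun p => W p ^ s := by
  intro r hr θ
  refine ((hW r hr θ).fun_pow s).congr_deriv ?_
  cases s with
  | zero => simp
  | succ s => rw [Nat.add_sub_cancel]; ring

lemma mul_radial {c : ℂ} {W : ℝ × ℝ → ℂ} (hW : IsAngularEigenfunction c W) (w : ℝ → ℂ) :
    IsAngularEigenfunction c fun p => W p * w (p.1 ^ 2 + p.2 ^ 2) := by
  intro r hr θ
  have radius_sq (t : ℝ) : (r * cos t) ^ 2 + (r * sin t) ^ 2 = r ^ 2 := by
    linear_combination r ^ 2 * cos_sq_add_sin_sq t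
  simpa only [polarCoord_symm_apply, radius_sq, mul_assoc] using (hW r hr θ).mul_const (w (r ^ 2))

variable {c : ℂ} {W : ℝ × ℝ → ℂ} {F : ℝ × ℝ → ℝ}

lemma integral_circle_rotOp_mul_add (hW : IsAngularEigenfunction c W) (hF : ContDiff ℝ 1 F)
    {r : ℝ} (hr : 0 < r) :
    ∫ θ in -π..π, (rotOp F (polarCoord.symm (r, θ)) * W (polarCoord.symm (r, θ)) +
      c * (F (polarCoord.symm (r, θ)) * W (polarCoord.symm (r, θ)))) = 0 := by
  have hasDerivAt_mul (θ : ℝ) :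
      HasDerivAt (fun t => (F (polarCoord.symm (r, t)) : ℂ) * W (polarCoord.symm (r, t)))
        (rotOp F (polarCoord.symm (r, θ)) * W (polarCoord.symm (r, θ)) +
          c * (F (polarCoord.symm (r, θ)) * W (polarCoord.symm (r, θ)))) θ :=
    ((hasDerivAt_comp_polarCoord_symm (hF.differentiable one_ne_zero) r θ).ofReal_comp.mul
      (hW r hr θ)).congr_deriv (by ring)
  have continuous_circle : Continuous fun θ : ℝ => polarCoord.symm (r, θ) :=
    continuous_polarCoord_symm.comp (.prodMk_right r)
  have continuous_F : Continuous fun θ => (F (polarCoord.symm (r, θ)) : ℂ) :=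
    Complex.continuous_ofReal.comp (hF.continuous.comp continuous_circle)
  have continuous_rotOp_F : Continuous fun θ => (rotOp F (polarCoord.symm (r, θ)) : ℂ) :=
    Complex.continuous_ofReal.comp
      ((contDiff_rotOp (n := 0) (by simpa)).continuous.comp continuous_circle)
  have continuous_W : Continuous fun θ => W (polarCoord.symm (r, θ)) :=
    continuous_iff_continuousAt.mpr fun θ => (hW r hr θ).continuousAt
  rw [intervalIntegral.integral_eq_sub_of_hasDerivAt (fun θ _ => hasDerivAt_mul θ)
    (((continuous_rotOp_F.mul continuous_W).add
      ((continuous_F.mul continuous_W).const_mul c)).intervalIntegrable _ _)]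
  simp

lemma integral_rotOp_mul (hW : IsAngularEigenfunction c W) (hF : ContDiff ℝ 1 F)
    (hint : Integrable fun p => F p * W p) (hint' : Integrable fun p => rotOp F p * W p) :
    ∫ p, rotOp F p * W p = -c * ∫ p, F p * W p := by
  have sum_eq_zero : ∫ p, (rotOp F p * W p + c * (F p * W p)) = 0 :=
    integral_eq_zero_of_forall_circle fun _ hr => hW.integral_circle_rotOp_mul_add hF hr
  rw [integral_add hint' (hint.const_mul c), integral_const_mul] at sum_eq_zero
  linear_combination sum_eq_zero

lemma integral_iterate_rotOp_mul (hW : IsAngularEigenfunction c W) {n : ℕ} (hF : ContDiff ℝ n F)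
    (hint : ∀ k ≤ n, Integrable fun p => (rotOp^[k] F) p * W p) :
    ∫ p, (rotOp^[n] F) p * W p = (-c) ^ n * ∫ p, F p * W p := by
  induction n generalizing F with
  | zero => simp
  | succ n ih =>
    have hF' : ContDiff ℝ (n + 1) F := mod_cast hF
    calc ∫ p, (rotOp^[n + 1] F) p * W p
        = (-c) ^ n * ∫ p, rotOp F p * W p :=
          ih (contDiff_rotOp hF') fun k hk => hint (k + 1) (by lia)
      _ = (-c) ^ n * (-c * ∫ p, F p * W p) := by
          rw [hW.integral_rotOp_mul (hF'.of_le (by simp)) (hint 0 (by lia)) (hint 1 (by lia))]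
      _ = (-c) ^ (n + 1) * ∫ p, F p * W p := by ring

end IsAngularEigenfunction

end Rotation

section Gaussian

lemma integrable_one_add_abs_pow_mul_exp_neg_mul_sq (m : ℕ) {b : ℝ} (hb : 0 < b) :
    Integrable fun x : ℝ => (1 + |x|) ^ m * exp (-b * x ^ 2) := by
  have integrable_monomial (k : ℕ) : Integrable fun x : ℝ => |x| ^ k * exp (-b * x ^ 2) := by
    simpa using (integrable_rpow_mul_exp_neg_mul_sq hb
      (s := k) (neg_one_lt_zero.trans_le k.cast_nonneg)).norm
  simp only [add_comm (1 : ℝ), add_pow, one_pow, mul_one, Finset.sum_mul]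
  refine integrable_finsetSum _ fun k _ => ?_
  simpa only [mul_right_comm] using (integrable_monomial k).mul_const (m.choose k : ℝ)

lemma HasPolynomialGrowth.integrable_mul_gaussian {f : ℝ × ℝ → ℂ} (hf : HasPolynomialGrowth f)
    (hmeas : AEStronglyMeasurable f) {h : ℝ} (hh : 0 < h) :
    Integrable fun p => f p * exp (-(p.1 ^ 2 + p.2 ^ 2) / h) := by
  obtain ⟨C, m, hC, hf⟩ := hf.exists_nonneg
  have integrable_line :=
    integrable_one_add_abs_pow_mul_exp_neg_mul_sq m (inv_pos.mpr hh)
  refine ((integrable_line.mul_prod integrable_line).const_mul C).mono'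
    (hmeas.mul (Continuous.aestronglyMeasurable (by fun_prop))) (.of_forall fun p => ?_)
  have norm_le : 1 + ‖p‖ ≤ (1 + |p.1|) * (1 + |p.2|) := by
    rw [Prod.norm_def, norm_eq_abs, norm_eq_abs, ← le_sub_iff_add_le', max_le_iff]
    constructor <;> nlinarith [abs_nonneg p.1, abs_nonneg p.2]
  have exp_eq : exp (-(p.1 ^ 2 + p.2 ^ 2) / h) = exp (-h⁻¹ * p.1 ^ 2) * exp (-h⁻¹ * p.2 ^ 2) := by
    rw [← exp_add]
    ring_nf
  calc ‖f p * exp (-(p.1 ^ 2 + p.2 ^ 2) / h)‖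
      = ‖f p‖ * exp (-(p.1 ^ 2 + p.2 ^ 2) / h) := by
        rw [norm_mul, Complex.norm_real, norm_eq_abs, abs_exp]
    _ ≤ C * ((1 + |p.1|) * (1 + |p.2|)) ^ m * exp (-(p.1 ^ 2 + p.2 ^ 2) / h) := by
        gcongr
        exact (hf p).trans (by gcongr)
    _ = _ := by
        rw [exp_eq, mul_pow]
        ring

lemma integrable_mul_pow_mul_comp_mul_gaussian {G : ℝ × ℝ → ℝ} (hG : Continuous G)
    (hGgrowth : HasPolynomialGrowth G) {P : ℝ → ℝ} (hP : Continuous P)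
    (hPgrowth : HasPolynomialGrowth P) (s : ℕ) (ε : ℂ) {h : ℝ} (hh : 0 < h) :
    Integrable fun p : ℝ × ℝ => (G p : ℂ) * (p.1 + Complex.I * ε * p.2) ^ s *
      (P (p.1 ^ 2 + p.2 ^ 2) * exp (-(p.1 ^ 2 + p.2 ^ 2) / h)) := by
  have linear_growth : HasPolynomialGrowth fun p : ℝ × ℝ => (p.1 : ℂ) + Complex.I * ε * p.2 :=
    .add (.ofReal .fst) (.mul (.const _) (.ofReal .snd))
  have sq_growth : HasPolynomialGrowth fun p : ℝ × ℝ => p.1 ^ 2 + p.2 ^ 2 :=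
    .add (.pow .fst 2) (.pow .snd 2)
  simpa only [mul_assoc] using ((hGgrowth.ofReal.mul (linear_growth.pow s)).mul
    (hPgrowth.comp sq_growth).ofReal).integrable_mul_gaussian
    (Continuous.aestronglyMeasurable (by fun_prop)) hh

end Gaussian

theorem ipp_rotation_general (w : ℝ → ℂ) (s n : ℕ) (ε : ℝ) (hε : ε = 1 ∨ ε = -1)
    (F : ℝ × ℝ → ℝ) (hF : ContDiff ℝ n F)
    (hint : ∀ k ≤ n, Integrable fun p : ℝ × ℝ => ((rotOp^[k] F) p : ℂ) *
      ((p.1 : ℂ) + Complex.I * (ε : ℂ) * (p.2 : ℂ)) ^ s * w (p.1 ^ 2 + p.2 ^ 2)) :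
    (-(s : ℂ) * Complex.I * (ε : ℂ)) ^ n *
      ∫ p : ℝ × ℝ, (F p : ℂ) * ((p.1 : ℂ) + Complex.I * (ε : ℂ) * (p.2 : ℂ)) ^ s *
        w (p.1 ^ 2 + p.2 ^ 2) =
    ∫ p : ℝ × ℝ, ((rotOp^[n] F) p : ℂ) *
      ((p.1 : ℂ) + Complex.I * (ε : ℂ) * (p.2 : ℂ)) ^ s * w (p.1 ^ 2 + p.2 ^ 2) := by
  have hε_sq : (ε : ℂ) ^ 2 = 1 := mod_cast sq_eq_one_iff.mpr hε
  have hW := ((IsAngularEigenfunction.add_I_mul hε_sq).pow s).mul_radial w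
  have key := hW.integral_iterate_rotOp_mul hF (by simpa only [mul_assoc] using hint)
  rw [← mul_assoc, ← neg_mul, ← neg_mul] at key
  simpa only [mul_assoc (Complex.ofReal _)] using key.symm

/-- The integration-by-parts lemma for the operator `[x∂_ξ − ξ∂_x]`. -/
theorem ipp_rotation (h : ℝ) (hh : 0 < h)
    (P : ℝ → ℝ) (hP : ContDiff ℝ 1 P)
    (hPgrowth : ∃ (C : ℝ) (m : ℕ), ∀ x : ℝ, |P x| ≤ C * (1 + |x|) ^ m)
    (hP'growth : ∃ (C : ℝ) (m : ℕ), ∀ x : ℝ, |deriv P x| ≤ C * (1 + |x|) ^ m)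
    (s : ℕ) (n : ℕ) (hn : 1 ≤ n) (ε : ℝ) (hε : ε = 1 ∨ ε = -1)
    (F : ℝ × ℝ → ℝ) (hF : ContDiff ℝ n F)
    (hFgrowth : ∀ k : ℕ, k ≤ n → ∃ (C : ℝ) (m : ℕ), ∀ p : ℝ × ℝ,
      ‖iteratedFDeriv ℝ k F p‖ ≤ C * (1 + ‖p‖) ^ m) :
    (-(s : ℂ) * Complex.I * (ε : ℂ)) ^ n *
      ∫ p : ℝ × ℝ, (F p : ℂ) * ((p.1 : ℂ) + Complex.I * (ε : ℂ) * (p.2 : ℂ)) ^ s *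
        (P (p.1 ^ 2 + p.2 ^ 2) : ℂ) * (Real.exp (-(p.1 ^ 2 + p.2 ^ 2) / h) : ℂ) =
    ∫ p : ℝ × ℝ, ((rotOp^[n] F) p : ℂ) *
        ((p.1 : ℂ) + Complex.I * (ε : ℂ) * (p.2 : ℂ)) ^ s *
        (P (p.1 ^ 2 + p.2 ^ 2) : ℂ) * (Real.exp (-(p.1 ^ 2 + p.2 ^ 2) / h) : ℂ) := by
  simpa only [mul_assoc, Complex.ofReal_mul] using
    ipp_rotation_general (fun r => P r * exp (-r / h)) s n ε hε F hF fun k hk =>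
      have hFk : HasTemperateGrowthUpTo (n - k) (rotOp^[k] F) :=
        .iterate_rotOp (by rw [Nat.sub_add_cancel hk]; exact ⟨hF, hFgrowth⟩)
      integrable_mul_pow_mul_comp_mul_gaussian hFk.1.continuous hFk.hasPolynomialGrowth
        hP.continuous hPgrowth s ε hh
end

section
/- Fix h > 0. For all integers j, k ≥ 0: ∫_{ℝ²} W_{h,ℝ}(ψ_j,ψ_k)(x,ξ) dμ_{ℝ²,h/2}(x,ξ) = δ_{jk}. -/
open Real MeasureTheory

/-- The Gaussian measure `μ_{ℝ²,s}` of variance `s` on `ℝ²`. -/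
noncomputable def gaussMeasure2 (s : ℝ) : Measure (ℝ × ℝ) :=
  volume.withDensity fun p =>
    ENNReal.ofReal ((2 * π * s)⁻¹ * Real.exp (-(p.1 ^ 2 + p.2 ^ 2) / (2 * s)))

/-! Put `h = 2v` and let `γ` be the centred Gaussian of variance `v`. Multiplying `W(f, g)(x, ξ)` by
the density of `γ` at `ξ` cancels the factor `exp(ξ² / h)`, and after rescaling `t = 2πvs` what is
left is the Fourier transform in `s` of `f(x + 2πvs) conj(g(x - 2πvs)) exp(-2π²vs²)`. Integrating
over `ξ` is therefore Fourier inversion at `s = 0`, so `∫ W(f, g) dμ = ∫ f conj(g) dγ`. For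
polynomial `f` and `g` the function being transformed is a polynomial in `(x, s)` times a Gaussian
in `s`, i.e. a finite sum of products of powers of `x` with Schwartz functions of `s`, which settles
all integrability questions. Finally `ψⱼ` is the rescaled Hermite polynomial `Heⱼ(x / √v) / √j!`,
and Stein's identity gives `∫ p Heₙ dγ = ∫ p⁽ⁿ⁾ dγ` for `v = 1`, hence orthonormality. -/

open ProbabilityTheory Polynomial FourierTransform SchwartzMap
open Filter (Tendsto cocompact)
open scoped NNReal ComplexConjugate Topology ZeroAtInfty

section GaussianMoments

variable {μ : ℝ} {v : ℝ≥0}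

lemma integrable_pow_gaussianReal (n : ℕ) : Integrable (fun x : ℝ => x ^ n) (gaussianReal μ v) :=
  integrable_pow_of_integrable_exp_mul one_ne_zero (integrable_exp_mul_gaussianReal 1)
    (integrable_exp_mul_gaussianReal (-1)) n

lemma integrable_eval_gaussianReal (p : ℝ[X]) :
    Integrable (fun x => p.eval x) (gaussianReal μ v) := by
  simp_rw [eval_eq_sum_range]
  exact integrable_finsetSum _ fun n _ => (integrable_pow_gaussianReal n).const_mul _

lemma hasDerivAt_gaussianPDFReal (x : ℝ) :
    HasDerivAt (gaussianPDFReal μ v) (-((x - μ) / v) * gaussianPDFReal μ v x) x := by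
  have hexp : HasDerivAt (fun x => -(x - μ) ^ 2 / (2 * v)) (-((x - μ) / v)) x := by
    refine ((((hasDerivAt_id x).sub_const μ).pow 2).neg.div_const (2 * v : ℝ)).congr_deriv ?_
    simp only [id_eq]
    ring
  rw [gaussianPDFReal_def]
  refine (hexp.exp.const_mul _).congr_deriv ?_
  ring

/- Stein's identity: integration by parts against the Gaussian density. -/
theorem integral_sub_mul_gaussianReal {f f' : ℝ → ℝ} (hf : ∀ x, HasDerivAt f (f' x) x)
    (hfi : Integrable f (gaussianReal μ v))
    (hxf : Integrable (fun x => (x - μ) * f x) (gaussianReal μ v))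
    (hf' : Integrable f' (gaussianReal μ v)) :
    ∫ x, (x - μ) * f x ∂gaussianReal μ v = v * ∫ x, f' x ∂gaussianReal μ v := by
  rcases eq_or_ne v 0 with rfl | hv
  · simp
  have hv' : (v : ℝ) ≠ 0 := by exact_mod_cast hv
  have hint {F : ℝ → ℝ} (hF : Integrable F (gaussianReal μ v)) :
      Integrable fun x => gaussianPDFReal μ v x * F x := by
    simpa [gaussianReal_of_var_ne_zero μ hv, integrable_withDensity_iff_integrable_smul'
      (measurable_gaussianPDF μ v) (.of_forall fun _ => gaussianPDF_lt_top)] using hF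
  have hderiv (x : ℝ) : HasDerivAt (fun x => gaussianPDFReal μ v x * f x)
      (gaussianPDFReal μ v x * (f' x - (v : ℝ)⁻¹ * ((x - μ) * f x))) x := by
    refine ((hasDerivAt_gaussianPDFReal x).mul (hf x)).congr_deriv ?_
    ring
  have hzero : ∫ x, (f' x - (v : ℝ)⁻¹ * ((x - μ) * f x)) ∂gaussianReal μ v = 0 := by
    rw [integral_gaussianReal_eq_integral_smul hv]
    exact integral_eq_zero_of_hasDerivAt_of_integrable hderiv
      (hint (hf'.sub (hxf.const_mul _))) (hint hfi)
  rw [integral_sub hf' (hxf.const_mul _), integral_const_mul, sub_eq_zero] at hzero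
  rw [hzero, mul_inv_cancel_left₀ hv']

lemma integral_X_sub_C_mul_gaussianReal (p : ℝ[X]) :
    ∫ x, ((X - C μ) * p).eval x ∂gaussianReal μ v =
      v * ∫ x, p.derivative.eval x ∂gaussianReal μ v := by
  have hmul := integrable_eval_gaussianReal (μ := μ) (v := v) ((X - C μ) * p)
  simp only [eval_mul, eval_sub, eval_X, eval_C] at hmul ⊢
  exact integral_sub_mul_gaussianReal p.hasDerivAt (integrable_eval_gaussianReal p) hmul
    (integrable_eval_gaussianReal _)

end GaussianMoments

section Hermite

lemma iterate_derivative_natDegree {R : Type*} [Semiring R] (p : R[X]) :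
    derivative^[p.natDegree] p = C (p.natDegree.factorial • p.leadingCoeff) := by
  have hdeg : (derivative^[p.natDegree] p).natDegree = 0 := by
    simpa using natDegree_iterate_derivative p p.natDegree
  rw [eq_C_of_natDegree_eq_zero hdeg, coeff_iterate_derivative, zero_add, Nat.descFactorial_self,
    leadingCoeff]

lemma iterate_derivative_hermite_self (n : ℕ) :
    derivative^[n] (hermite n) = C (n.factorial : ℤ) := by
  simpa using iterate_derivative_natDegree (hermite n)

/- As `Heₙ₊₁ = (X - D) Heₙ`, Stein's identity for `p Heₙ` moves one derivative onto `p`. -/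
lemma integral_mul_hermite (p : ℝ[X]) (n : ℕ) :
    ∫ x, (p * (hermite n).map (Int.castRingHom ℝ)).eval x ∂gaussianReal 0 1 =
      ∫ x, (derivative^[n] p).eval x ∂gaussianReal 0 1 := by
  induction n generalizing p with
  | zero => simp
  | succ n ih =>
    set H := (hermite n).map (Int.castRingHom ℝ)
    have hstein := integral_X_sub_C_mul_gaussianReal (μ := 0) (v := 1) (p * H)
    have hsucc : p * (hermite (n + 1)).map (Int.castRingHom ℝ) =
        (X - C 0) * (p * H) - p * derivative H := by
      simp only [hermite_succ, Polynomial.map_sub, Polynomial.map_mul, map_X, derivative_map, H,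
        C_0]
      ring
    have hleibniz : derivative (p * H) = derivative p * H + p * derivative H := derivative_mul
    simp only [hleibniz, eval_add, NNReal.coe_one, one_mul] at hstein
    rw [integral_add (integrable_eval_gaussianReal _) (integrable_eval_gaussianReal _)] at hstein
    simp only [hsucc, eval_sub]
    rw [integral_sub (integrable_eval_gaussianReal _) (integrable_eval_gaussianReal _), hstein,
      add_sub_cancel_right, ih, Function.iterate_succ_apply]

theorem integral_aeval_hermite_mul_aeval_hermite (m n : ℕ) :
    ∫ x : ℝ, aeval x (hermite m) * aeval x (hermite n) ∂gaussianReal 0 1 =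
      if m = n then (n.factorial : ℝ) else 0 := by
  wlog hmn : m ≤ n generalizing m n
  · simp_rw [mul_comm (aeval _ (hermite m)), this n m (le_of_not_ge hmn), eq_comm (a := n)]
    split_ifs with h <;> simp [h]
  have hmul := integral_mul_hermite ((hermite m).map (Int.castRingHom ℝ)) n
  simp only [eval_mul, eval_map, iterate_derivative_map] at hmul
  refine hmul.trans ?_
  rcases hmn.eq_or_lt with rfl | hlt
  · simp [iterate_derivative_hermite_self]
  · simp [iterate_derivative_eq_zero (natDegree_hermite.trans_lt hlt), hlt.ne]

lemma iteratedDeriv_exp_neg_sq (n : ℕ) (c x : ℝ) :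
    iteratedDeriv n (fun t => Real.exp (-((c * t) ^ 2 / 2))) x =
      (-c) ^ n * aeval (c * x) (hermite n) * Real.exp (-((c * x) ^ 2 / 2)) := by
  rw [iteratedDeriv_comp_const_mul (f := fun y => Real.exp (-(y ^ 2 / 2))) (by fun_prop),
    iteratedDeriv_eq_iterate]
  beta_reduce
  rw [deriv_gaussian_eq_hermite_mul_gaussian, neg_pow c]
  ring

end Hermite

section Schwartz

lemma tendsto_eval_mul_exp_neg_sq_cocompact (p : ℝ[X]) {c : ℝ} (hc : c ≠ 0) :
    Tendsto (fun x => p.eval x * Real.exp (-((c * x) ^ 2 / 2))) (cocompact ℝ) (𝓝 0) := by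
  induction p using Polynomial.induction_on' with
  | add p q hp hq => simpa only [eval_add, add_mul, add_zero] using hp.add hq
  | monomial n a =>
    have hmono := (tendsto_rpow_abs_mul_exp_neg_mul_sq_cocompact
      (show 0 < c ^ 2 / 2 by positivity) n).const_mul |a|
    rw [mul_zero] at hmono
    refine squeeze_zero_norm (fun x => le_of_eq ?_) hmono
    rw [eval_monomial, norm_mul, norm_mul, norm_pow, Real.norm_eq_abs, Real.norm_eq_abs,
      Real.norm_eq_abs, Real.abs_exp, Real.rpow_natCast, mul_assoc]
    ring_nf

lemma exists_abs_eval_mul_exp_neg_sq_le (p : ℝ[X]) {c : ℝ} (hc : c ≠ 0) :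
    ∃ M, ∀ x, |p.eval x * Real.exp (-((c * x) ^ 2 / 2))| ≤ M := by
  let f : C₀(ℝ, ℝ) :=
    ⟨⟨fun x => p.eval x * Real.exp (-((c * x) ^ 2 / 2)), by fun_prop⟩,
      tendsto_eval_mul_exp_neg_sq_cocompact p hc⟩
  obtain ⟨M, hM⟩ := f.isBounded_range.exists_norm_le
  exact ⟨M, fun x => hM _ ⟨x, rfl⟩⟩

lemma exists_schwartzMap_eq_exp_neg_sq {c : ℝ} (hc : c ≠ 0) :
    ∃ φ : 𝓢(ℝ, ℝ), ∀ t, φ t = Real.exp (-((c * t) ^ 2 / 2)) := by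
  refine ⟨⟨fun t => Real.exp (-((c * t) ^ 2 / 2)), by fun_prop, fun k n => ?_⟩, fun t => rfl⟩
  obtain ⟨M, hM⟩ := exists_abs_eval_mul_exp_neg_sq_le
    (X ^ k * (C ((-c) ^ n) * ((hermite n).map (Int.castRingHom ℝ)).comp (C c * X))) hc
  refine ⟨M, fun x => le_of_eq_of_le ?_ (hM x)⟩
  rw [norm_iteratedFDeriv_eq_norm_iteratedDeriv, iteratedDeriv_exp_neg_sq, ← norm_pow, ← norm_mul,
    Real.norm_eq_abs]
  simp [aeval_def, eval₂_eq_eval_map, mul_assoc]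

lemma exists_schwartzMap_eq_pow_mul_exp_neg_sq (n : ℕ) {c : ℝ} (hc : c ≠ 0) :
    ∃ φ : 𝓢(ℝ, ℂ), ∀ t, φ t = (t : ℂ) ^ n * (Real.exp (-((c * t) ^ 2 / 2)) : ℂ) := by
  obtain ⟨φ, hφ⟩ := exists_schwartzMap_eq_exp_neg_sq hc
  refine ⟨smulLeftCLM ℂ (fun t : ℝ => (t : ℂ) ^ n) (postcompCLM (𝕜 := ℝ) Complex.ofRealCLM φ),
    fun t => ?_⟩
  rw [smulLeftCLM_apply_apply (by fun_prop)]
  simp [hφ]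

end Schwartz

section PartialFourier

variable {V E : Type*} [NormedAddCommGroup V] [InnerProductSpace ℝ V] [FiniteDimensional ℝ V]
  [MeasurableSpace V] [BorelSpace V] [NormedAddCommGroup E] [NormedSpace ℂ E] [CompleteSpace E]

lemma integral_fourier_schwartzMap (φ : 𝓢(V, E)) : ∫ w, 𝓕 φ w = φ 0 := by
  conv_rhs => rw [← FourierTransform.fourierInv_fourier_eq (F := 𝓢(V, E)) φ, fourierInv_coe]
  simp [Real.fourierInv_eq]

theorem integral_prod_fourier_sum_smul {ι α : Type*} [MeasurableSpace α] {ν : Measure α}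
    [SFinite ν] (s : Finset ι) {a : ι → α → ℂ} (ha : ∀ i ∈ s, Integrable (a i) ν)
    (φ : ι → 𝓢(V, E)) :
    ∫ p, 𝓕 (fun t => ∑ i ∈ s, a i p.1 • φ i t) p.2 ∂ν.prod volume =
      ∫ x, ∑ i ∈ s, a i x • φ i 0 ∂ν := by
  have hlin (x : α) (w : V) :
      𝓕 (fun t => ∑ i ∈ s, a i x • φ i t) w = ∑ i ∈ s, a i x • 𝓕 (φ i) w := by
    have hcoe : (fun t => ∑ i ∈ s, a i x • φ i t) = ⇑(∑ i ∈ s, a i x • φ i) := by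
      ext t
      simp
    rw [hcoe, ← fourier_coe, fourier_sum]
    simp [fourier_smul]
  simp_rw [hlin]
  rw [integral_finsetSum _ fun i hi => (ha i hi).smul_prod (𝓕 (φ i)).integrable,
    integral_finsetSum _ fun i hi => (ha i hi).smul_const _]
  refine Finset.sum_congr rfl fun i _ => ?_
  rw [integral_prod_smul, integral_fourier_schwartzMap, integral_smul_const]

lemma integral_prod_fourier_mvPolynomial_mul_gaussian (P : MvPolynomial (Fin 2) ℂ) {c : ℝ}
    (hc : c ≠ 0) {μ : ℝ} {v : ℝ≥0} :
    ∫ p : ℝ × ℝ, 𝓕 (fun s : ℝ => MvPolynomial.eval ![(p.1 : ℂ), (s : ℂ)] P *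
        (Real.exp (-((c * s) ^ 2 / 2)) : ℂ)) p.2 ∂(gaussianReal μ v).prod volume =
      ∫ x : ℝ, MvPolynomial.eval ![(x : ℂ), 0] P ∂gaussianReal μ v := by
  choose φ hφ using fun n => exists_schwartzMap_eq_pow_mul_exp_neg_sq n hc
  have ha (d : Fin 2 →₀ ℕ) :
      Integrable (fun x : ℝ => P.coeff d * (x : ℂ) ^ d 0) (gaussianReal μ v) := by
    simpa using (integrable_pow_gaussianReal (d 0)).ofReal.const_mul (P.coeff d)
  have heval (x s : ℝ) : MvPolynomial.eval ![(x : ℂ), (s : ℂ)] P *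
      (Real.exp (-((c * s) ^ 2 / 2)) : ℂ) =
        ∑ d ∈ P.support, (P.coeff d * (x : ℂ) ^ d 0) • φ (d 1) s := by
    simp only [MvPolynomial.eval_eq', Fin.prod_univ_two, Finset.sum_mul, hφ, smul_eq_mul,
      Matrix.cons_val_zero, Matrix.cons_val_one, mul_assoc]
  simp_rw [heval]
  refine (integral_prod_fourier_sum_smul P.support (fun d _ => ha d) fun d => φ (d 1)).trans ?_
  simp_rw [← heval]
  simp

end PartialFourier

section Wigner

variable {v : ℝ≥0}

lemma gaussMeasure2_eq_prod (hv : v ≠ 0) :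
    gaussMeasure2 v = (gaussianReal 0 v).prod (gaussianReal 0 v) := by
  rw [gaussianReal_of_var_ne_zero 0 hv, prod_withDensity (measurable_gaussianPDF 0 v)
    (measurable_gaussianPDF 0 v), gaussMeasure2, Measure.volume_eq_prod]
  congr 1
  ext p
  rw [gaussianPDF, gaussianPDF, ← ENNReal.ofReal_mul (gaussianPDFReal_nonneg 0 v p.1)]
  congr 1
  have hsqrt : (2 * π * v)⁻¹ = (√(2 * π * v))⁻¹ * (√(2 * π * v))⁻¹ := by
    rw [← mul_inv, Real.mul_self_sqrt (by positivity)]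
  rw [gaussianPDFReal, gaussianPDFReal, hsqrt, mul_mul_mul_comm, ← Real.exp_add]
  ring_nf

lemma integral_prod_gaussianReal {α E : Type*} [MeasurableSpace α] [NormedAddCommGroup E]
    [NormedSpace ℝ E] (ν : Measure α) [SFinite ν] (μ : ℝ) (hv : v ≠ 0) (F : α × ℝ → E) :
    ∫ p, F p ∂ν.prod (gaussianReal μ v) =
      ∫ p, gaussianPDFReal μ v p.2 • F p ∂ν.prod volume := by
  rw [gaussianReal_of_var_ne_zero μ hv, prod_withDensity_right (measurable_gaussianPDF μ v),
    integral_withDensity_eq_integral_toReal_smul (by fun_prop)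
      (.of_forall fun _ => gaussianPDF_lt_top)]
  simp only [toReal_gaussianPDF]

lemma gaussianPDFReal_mul_exp_mul_rpow (ζ : ℝ) :
    gaussianPDFReal 0 v ζ * Real.exp (ζ ^ 2 / (2 * v)) * (π * (2 * v)) ^ (-(1 : ℝ) / 2) =
      |(2 * π * v)⁻¹| := by
  have hexp : Real.exp (-(ζ - 0) ^ 2 / (2 * v)) * Real.exp (ζ ^ 2 / (2 * v)) = 1 := by
    rw [← Real.exp_add, sub_zero, neg_div, neg_add_cancel, Real.exp_zero]
  have hrpow : (π * (2 * v)) ^ (-(1 : ℝ) / 2) = (√(2 * π * v))⁻¹ := by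
    rw [neg_div, Real.rpow_neg (by positivity), ← Real.sqrt_eq_rpow]
    ring_nf
  rw [gaussianPDFReal, hrpow, mul_assoc (√(2 * π * v))⁻¹, hexp, mul_one, ← mul_inv,
    Real.mul_self_sqrt (by positivity), abs_of_nonneg (by positivity)]

/- Substitute `t = 2πvs` in the integral defining the Wigner function. -/
lemma gaussianPDFReal_smul_wigner1 (hv : v ≠ 0) (f g : ℝ → ℂ) (x ζ : ℝ) :
    gaussianPDFReal 0 v ζ • wigner1 (2 * v) f g x ζ =
      𝓕 (fun s : ℝ => f (x + 2 * π * v * s) * conj (g (x - 2 * π * v * s)) *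
        (Real.exp (-((2 * π * √v * s) ^ 2 / 2)) : ℂ)) ζ := by
  have hvc : (v : ℂ) ≠ 0 := by exact_mod_cast hv
  let F (t : ℝ) : ℂ := Complex.exp (-2 * Complex.I * ζ * t / (2 * v : ℝ)) * f (x + t) *
    conj (g (x - t)) * (Real.exp (-t ^ 2 / (2 * v)) : ℂ)
  have hF (s : ℝ) : F (2 * π * v * s) = Complex.exp (↑(-2 * π * s * ζ) * Complex.I) •
      (f (x + 2 * π * v * s) * conj (g (x - 2 * π * v * s)) *
        (Real.exp (-((2 * π * √v * s) ^ 2 / 2)) : ℂ)) := by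
    have hphase : -2 * Complex.I * ζ * (2 * π * v * s : ℝ) / (2 * v : ℝ) =
        ↑(-2 * π * s * ζ) * Complex.I := by
      push_cast
      field_simp
    have hgauss : -(2 * π * v * s) ^ 2 / (2 * v) = -((2 * π * √v * s) ^ 2 / 2) := by
      rw [mul_pow _ s, mul_pow _ s, mul_pow _ √(v : ℝ), Real.sq_sqrt v.coe_nonneg]
      field_simp
    simp only [F, hphase, hgauss, smul_eq_mul]
    ring
  rw [Real.fourier_real_eq_integral_exp_smul]
  simp_rw [← hF]
  rw [Measure.integral_comp_mul_left, ← gaussianPDFReal_mul_exp_mul_rpow ζ, wigner1,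
    integral_mul_const]
  simp only [Complex.real_smul, Complex.ofReal_mul, F]
  ring

lemma exists_mvPolynomial_eval_eq_mul_conj (p q : ℂ[X]) (c : ℝ) :
    ∃ P : MvPolynomial (Fin 2) ℂ, ∀ x s : ℝ, MvPolynomial.eval ![(x : ℂ), (s : ℂ)] P =
      p.eval ((x + c * s : ℝ) : ℂ) * conj (q.eval ((x - c * s : ℝ) : ℂ)) := by
  let u : MvPolynomial (Fin 2) ℂ := .X 0 + .C (c : ℂ) * .X 1
  let w : MvPolynomial (Fin 2) ℂ := .X 0 - .C (c : ℂ) * .X 1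
  have hconj (t : ℝ) : conj (q.eval (t : ℂ)) = (q.map (starRingEnd ℂ)).eval (t : ℂ) := by
    rw [← eval_map_apply, Complex.conj_ofReal]
  refine ⟨aeval u p * aeval w (q.map (starRingEnd ℂ)), fun x s => ?_⟩
  rw [map_mul, hconj, ← MvPolynomial.coe_aeval_eq_eval]
  simp only [AlgHom.coe_toRingHom, ← aeval_algHom_apply]
  simp [u, w, coe_aeval_eq_eval]

theorem integral_wigner1_eval (hv : v ≠ 0) (p q : ℂ[X]) :
    ∫ z : ℝ × ℝ, wigner1 (2 * v) (fun t => p.eval (t : ℂ)) (fun t => q.eval (t : ℂ)) z.1 z.2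
        ∂gaussMeasure2 v =
      ∫ x : ℝ, p.eval (x : ℂ) * conj (q.eval (x : ℂ)) ∂gaussianReal 0 v := by
  obtain ⟨P, hP⟩ := exists_mvPolynomial_eval_eq_mul_conj p q (2 * π * v)
  have hc : 2 * π * √v ≠ 0 := by positivity
  rw [gaussMeasure2_eq_prod hv, integral_prod_gaussianReal _ _ hv]
  simp_rw [gaussianPDFReal_smul_wigner1 hv, ← hP]
  rw [integral_prod_fourier_mvPolynomial_mul_gaussian P hc]
  simpa using congrArg (fun F => ∫ x : ℝ, F x ∂gaussianReal 0 v) (funext fun x => hP x 0)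

end Wigner

section HermiteFunctions

variable {v : ℝ≥0}

lemma psi_eq_aeval_hermite_s8 (hv : v ≠ 0) (j : ℕ) (x : ℝ) :
    psi (2 * v) j x = (√j.factorial)⁻¹ * aeval ((√v)⁻¹ * x) (hermite j) := by
  have hsq (t : ℝ) : -t ^ 2 / (2 * v) = -(((√v)⁻¹ * t) ^ 2 / 2) := by
    rw [mul_pow, inv_pow, Real.sq_sqrt v.coe_nonneg]
    field_simp
  have hpow : (2 * (v : ℝ) / 2) ^ ((j : ℝ) / 2) = √v ^ j := by
    rw [mul_div_cancel_left₀ (v : ℝ) two_ne_zero, Real.rpow_div_two_eq_sqrt _ v.coe_nonneg,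
      Real.rpow_natCast]
  have hcancel : (-1) ^ j * √(v : ℝ) ^ j * (-(√v)⁻¹) ^ j = 1 := by
    rw [← mul_pow, ← mul_pow, neg_one_mul, neg_mul_neg, mul_inv_cancel₀ (by positivity), one_pow]
  have hexp : Real.exp (x ^ 2 / (2 * v)) * Real.exp (-(((√v)⁻¹ * x) ^ 2 / 2)) = 1 := by
    rw [← hsq, ← Real.exp_add, neg_div, add_neg_cancel, Real.exp_zero]
  unfold psi
  simp_rw [hsq]
  rw [iteratedDeriv_exp_neg_sq, hpow]
  linear_combination (√j.factorial)⁻¹ * aeval ((√v)⁻¹ * x) (hermite j) *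
    (Real.exp (x ^ 2 / (2 * v)) * Real.exp (-(((√v)⁻¹ * x) ^ 2 / 2)) * hcancel + hexp)

lemma exists_polynomial_psi_eq_eval (hv : v ≠ 0) (j : ℕ) :
    ∃ p : ℂ[X], ∀ t : ℝ, (psi (2 * v) j t : ℂ) = p.eval (t : ℂ) := by
  refine ⟨C (((√j.factorial)⁻¹ : ℝ) : ℂ) *
    ((hermite j).map (Int.castRingHom ℂ)).comp (C (((√v)⁻¹ : ℝ) : ℂ) * X), fun t => ?_⟩
  have hcast : ((aeval ((√v)⁻¹ * t) (hermite j) : ℝ) : ℂ) =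
      aeval (((√v)⁻¹ * t : ℝ) : ℂ) (hermite j) :=
    (aeval_algebraMap_apply ℂ ((√v)⁻¹ * t) (hermite j)).symm
  rw [psi_eq_aeval_hermite_s8 hv, Complex.ofReal_mul, hcast]
  simp [aeval_def, eval₂_eq_eval_map]

theorem integral_psi_mul_psi (hv : v ≠ 0) (j k : ℕ) :
    ∫ x, psi (2 * v) j x * psi (2 * v) k x ∂gaussianReal 0 v = if j = k then 1 else 0 := by
  have hmap : gaussianReal 0 v = (gaussianReal 0 1).map (√v * ·) := by
    rw [gaussianReal_map_const_mul]
    congr 1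
    · simp
    · ext
      simp
  rw [hmap]
  simp_rw [psi_eq_aeval_hermite_s8 hv]
  rw [integral_map (by fun_prop) (by fun_prop)]
  have hsqrt : √(v : ℝ) ≠ 0 := by positivity
  simp_rw [inv_mul_cancel_left₀ hsqrt, mul_mul_mul_comm]
  rw [integral_const_mul, integral_aeval_hermite_mul_aeval_hermite]
  split_ifs with hjk
  · subst hjk
    rw [← mul_inv, Real.mul_self_sqrt (by positivity)]
    exact inv_mul_cancel₀ (by positivity)
  · simp

end HermiteFunctions

/-- `∫_{ℝ²} W_{h,ℝ}(ψ_j,ψ_k) dμ_{ℝ²,h/2} = δ_{jk}`. -/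
theorem integral_wigner_hermite (h : ℝ) (hh : 0 < h) (j k : ℕ) :
    ∫ p : ℝ × ℝ, wigner1 h (fun t => (psi h j t : ℂ)) (fun t => (psi h k t : ℂ)) p.1 p.2
        ∂ gaussMeasure2 (h / 2) = if j = k then 1 else 0 := by
  obtain ⟨v, hv, rfl⟩ : ∃ v : ℝ≥0, v ≠ 0 ∧ h = 2 * v :=
    ⟨(h / 2).toNNReal, by simpa using hh, by rw [Real.coe_toNNReal _ (by positivity)]; ring⟩
  obtain ⟨p, hp⟩ := exists_polynomial_psi_eq_eval hv j
  obtain ⟨q, hq⟩ := exists_polynomial_psi_eq_eval hv k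
  rw [mul_div_cancel_left₀ (v : ℝ) two_ne_zero]
  simp_rw [hp, hq]
  rw [integral_wigner1_eval hv]
  simp_rw [← hp, ← hq, Complex.conj_ofReal, ← Complex.ofReal_mul]
  rw [integral_complex_ofReal, integral_psi_mul_psi hv]
  split_ifs <;> simp
end

section
/- Fix h > 0. For all real numbers a > 0 and ν > 0: ∫_{ℝ²} e^{−ν a² (u²+v²)}·a²·(u² + v² − h/2)·e^{−(u²+v²)/h}·(πh)^{−1} du dv = (h a²/2)·(1 − hνa²)/(1 + hνa²)². In particular, this quantity is strictly negative whenever ν > 1/(h a²); this exhibits the non-positivity of the Weyl quantization of the positive symbol (u,v) ↦ e^{−νa²(u²+v²)} tested against the function √(2/h)·a·x, in the one-dimensional Gaussian setting. -/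
open Real MeasureTheory

/-!
Up to constants, the integrand is `(r - h / 2) e^{-br}` with `r = u² + v²` and `b = νa² + 1/h`. The
map `(u, v) ↦ u² + v²` pushes planar Lebesgue measure forward to `π dr` on the half-line, so the
integral is `π ∫₀^∞ (r - h / 2) e^{-br} dr = π (1 / b² - h / (2 b))`. It is negative as soon as the
mean `1 / b` of the exponential law falls below `h / 2`.
-/

open Set
open scoped Nat

lemma integral_comp_sq_add_sq {E : Type*} [NormedAddCommGroup E] [NormedSpace ℝ E] (f : ℝ → E) :
    ∫ p : ℝ × ℝ, f (p.1 ^ 2 + p.2 ^ 2) = π • ∫ r in Ioi 0, f r := by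
  have norm_sq (z : ℂ) :
      (Complex.measurableEquivRealProd z).1 ^ 2 + (Complex.measurableEquivRealProd z).2 ^ 2 =
        ‖z‖ ^ 2 := by
    rw [Complex.sq_norm, Complex.normSq_apply, ← sq, ← sq]
    rfl
  have volume_ball : volume.real (Metric.ball (0 : ℂ) 1) = π := by
    simp [measureReal_def]
  calc ∫ p : ℝ × ℝ, f (p.1 ^ 2 + p.2 ^ 2)
      = ∫ z : ℂ, f (‖z‖ ^ 2) := by
        simp only [← Complex.volume_preserving_equiv_real_prod.integral_comp', norm_sq]
    _ = π • ∫ ρ in Ioi (0 : ℝ), (2 * ρ) • f (ρ ^ 2) := by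
        rw [integral_fun_norm_addHaar volume (fun ρ ↦ f (ρ ^ 2)), volume_ball,
          Complex.finrank_real_complex, smul_comm, ← ofNat_smul_eq_nsmul ℝ]
        simp only [mul_smul, integral_smul, pow_one, Nat.add_one_sub_one]
    _ = π • ∫ r in Ioi 0, f r := by
        rw [← integral_comp_rpow_Ioi_of_pos (g := f) two_pos]
        norm_num

lemma integral_pow_mul_exp_neg_mul_Ioi (n : ℕ) {b : ℝ} (hb : 0 < b) :
    ∫ t in Ioi 0, t ^ n * exp (-(b * t)) = n ! / b ^ (n + 1) := by
  have gamma_integral := integral_rpow_mul_exp_neg_mul_Ioi n.cast_add_one_pos hb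
  simp only [add_sub_cancel_right, rpow_natCast, Gamma_nat_eq_factorial] at gamma_integral
  rw [gamma_integral, ← Nat.cast_add_one, rpow_natCast, one_div_pow, one_div_mul_eq_div]

lemma integrableOn_pow_mul_exp_neg_mul_Ioi (n : ℕ) {b : ℝ} (hb : 0 < b) :
    IntegrableOn (fun t ↦ t ^ n * exp (-(b * t))) (Ioi 0) := by
  refine Integrable.of_integral_ne_zero ?_
  rw [integral_pow_mul_exp_neg_mul_Ioi n hb]
  positivity

lemma integral_sub_mul_exp_neg_mul_Ioi (c : ℝ) {b : ℝ} (hb : 0 < b) :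
    ∫ t in Ioi 0, (t - c) * exp (-(b * t)) = 1 / b ^ 2 - c / b := by
  have integrable_exp : IntegrableOn (fun t ↦ exp (-(b * t))) (Ioi 0) := by
    simpa using integrableOn_pow_mul_exp_neg_mul_Ioi 0 hb
  have integrable_mul_exp : IntegrableOn (fun t ↦ t * exp (-(b * t))) (Ioi 0) := by
    simpa using integrableOn_pow_mul_exp_neg_mul_Ioi 1 hb
  have integral_exp : ∫ t in Ioi 0, exp (-(b * t)) = 1 / b := by
    simpa using integral_pow_mul_exp_neg_mul_Ioi 0 hb
  have integral_mul_exp : ∫ t in Ioi 0, t * exp (-(b * t)) = 1 / b ^ 2 := by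
    simpa using integral_pow_mul_exp_neg_mul_Ioi 1 hb
  simp only [sub_mul]
  rw [integral_sub integrable_mul_exp (integrable_exp.const_mul c), integral_const_mul,
    integral_mul_exp, integral_exp, mul_one_div]

lemma integral_sq_add_sq_sub_mul_exp_neg_mul (c : ℝ) {b : ℝ} (hb : 0 < b) :
    ∫ p : ℝ × ℝ, (p.1 ^ 2 + p.2 ^ 2 - c) * exp (-(b * (p.1 ^ 2 + p.2 ^ 2))) =
      π * (1 / b ^ 2 - c / b) := by
  rw [integral_comp_sq_add_sq fun r ↦ (r - c) * exp (-(b * r)),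
    integral_sub_mul_exp_neg_mul_Ioi c hb, smul_eq_mul]

theorem nonpositivity_integral_general {h a ν : ℝ} (hh : h ≠ 0) (ha : a ≠ 0)
    (hb : 0 < ν * a ^ 2 + 1 / h) :
    (∫ p : ℝ × ℝ, exp (-ν * a ^ 2 * (p.1 ^ 2 + p.2 ^ 2)) * a ^ 2 *
        (p.1 ^ 2 + p.2 ^ 2 - h / 2) * exp (-(p.1 ^ 2 + p.2 ^ 2) / h) * (π * h)⁻¹) =
      (h * a ^ 2 / 2) * (1 - h * ν * a ^ 2) / (1 + h * ν * a ^ 2) ^ 2 ∧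
    (1 / (h * a ^ 2) < ν →
      (∫ p : ℝ × ℝ, exp (-ν * a ^ 2 * (p.1 ^ 2 + p.2 ^ 2)) * a ^ 2 *
        (p.1 ^ 2 + p.2 ^ 2 - h / 2) * exp (-(p.1 ^ 2 + p.2 ^ 2) / h) * (π * h)⁻¹) < 0) := by
  set b := ν * a ^ 2 + 1 / h with b_def
  have add_eq : 1 + h * ν * a ^ 2 = h * b := by rw [b_def]; field_simp; ring
  have sub_eq : 1 - h * ν * a ^ 2 = 2 - h * b := by linarith
  have integrand_eq (r : ℝ) :
      exp (-ν * a ^ 2 * r) * a ^ 2 * (r - h / 2) * exp (-r / h) * (π * h)⁻¹ =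
        a ^ 2 * (π * h)⁻¹ * ((r - h / 2) * exp (-(b * r))) := by
    have exponent_eq : -(b * r) = -ν * a ^ 2 * r + -r / h := by rw [b_def]; ring
    rw [exponent_eq, exp_add]
    ring
  simp only [integrand_eq, integral_const_mul, integral_sq_add_sq_sub_mul_exp_neg_mul _ hb]
  have value_eq : a ^ 2 * (π * h)⁻¹ * (π * (1 / b ^ 2 - h / 2 / b)) =
      (h * a ^ 2 / 2) * (1 - h * ν * a ^ 2) / (1 + h * ν * a ^ 2) ^ 2 := by
    rw [add_eq, sub_eq]
    field_simp
  refine ⟨value_eq, fun hν ↦ value_eq.trans_lt ?_⟩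
  have numerator_neg : h * a ^ 2 / 2 * (1 - h * ν * a ^ 2) < 0 := by
    calc h * a ^ 2 / 2 * (1 - h * ν * a ^ 2)
        = (h * a ^ 2) ^ 2 / 2 * (1 / (h * a ^ 2) - ν) := by field_simp
      _ < 0 := mul_neg_of_pos_of_neg (by positivity) (sub_neg.2 hν)
  exact div_neg_of_neg_of_pos numerator_neg (by rw [add_eq]; positivity)

/-- The explicit value of the Gaussian integral witnessing the non-positivity of the
Weyl quantization of the positive symbol `(u,v) ↦ e^{−νa²(u²+v²)}`, and its strict
negativity for `ν > 1/(h a²)`. -/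
theorem nonpositivity_integral (h : ℝ) (hh : 0 < h) (a ν : ℝ) (ha : 0 < a) (hν : 0 < ν) :
    (∫ p : ℝ × ℝ, Real.exp (-ν * a ^ 2 * (p.1 ^ 2 + p.2 ^ 2)) * a ^ 2 *
        (p.1 ^ 2 + p.2 ^ 2 - h / 2) * Real.exp (-(p.1 ^ 2 + p.2 ^ 2) / h) * (π * h)⁻¹) =
      (h * a ^ 2 / 2) * (1 - h * ν * a ^ 2) / (1 + h * ν * a ^ 2) ^ 2 ∧
    (1 / (h * a ^ 2) < ν →
      (∫ p : ℝ × ℝ, Real.exp (-ν * a ^ 2 * (p.1 ^ 2 + p.2 ^ 2)) * a ^ 2 *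
        (p.1 ^ 2 + p.2 ^ 2 - h / 2) * Real.exp (-(p.1 ^ 2 + p.2 ^ 2) / h) * (π * h)⁻¹) < 0) := by
  exact nonpositivity_integral_general hh.ne' ha.ne' (by positivity)
end

section
/- Fix h > 0. Let u, v : ℝ → ℂ be functions such that γ_{ℝ,h/2}u and γ_{ℝ,h/2}v are rapidly decreasing (Schwartz). Then for all real x, ξ: e^{−(x²+ξ²)/h}·W_{h,ℝ}(u,v)(x,ξ) = (1/2)·W(γ_{ℝ,h/2}u, γ_{ℝ,h/2}v)(x, ξ/(2πh)). -/
open Real MeasureTheory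

/-- The classical Wigner function `W(u,v)(x,ξ) = ∫ e^{−2iπzξ} u(x+z/2) conj(v(x−z/2)) dz`. -/
noncomputable def wignerCl (u v : ℝ → ℂ) (x ξ : ℝ) : ℂ :=
  ∫ z : ℝ, Complex.exp (-2 * Complex.I * (π : ℂ) * (z : ℂ) * (ξ : ℂ)) * u (x + z / 2) *
    (starRingEnd ℂ) (v (x - z / 2))

/-- The map `γ_{ℝ,h/2}`: `(γ_{ℝ,h/2} f)(y) = (πh)^{−1/4} e^{−y²/(2h)} f(y)`. -/
noncomputable def gammaMap (h : ℝ) (f : ℝ → ℂ) : ℝ → ℂ := fun y =>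
  (((π * h) ^ (-(1 : ℝ) / 4) * Real.exp (-y ^ 2 / (2 * h)) : ℝ) : ℂ) * f y

/-- The integrand of the Gaussian Wigner function `wigner1 h f g z ζ`, named so that convergence of
the defining integral can be stated. -/
noncomputable def wigner1Integrand (h : ℝ) (f g : ℝ → ℂ) (z ζ t : ℝ) : ℂ :=
  Complex.exp (-2 * Complex.I * (ζ : ℂ) * (t : ℂ) / (h : ℂ)) * f (z + t) *
    (starRingEnd ℂ) (g (z - t)) * (Real.exp (-t ^ 2 / h) : ℂ) *
      (((π * h) ^ (-(1 : ℝ) / 2) : ℝ) : ℂ)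

/-- The integrand of the classical Wigner function `wignerCl u v x ξ`, named so that convergence of
the defining integral can be stated. -/
noncomputable def wignerClIntegrand (u v : ℝ → ℂ) (x ξ z : ℝ) : ℂ :=
  Complex.exp (-2 * Complex.I * (π : ℂ) * (z : ℂ) * (ξ : ℂ)) * u (x + z / 2) *
    (starRingEnd ℂ) (v (x - z / 2))

theorem wignerClIntegrand_two_mul (u v : ℝ → ℂ) (x ξ t : ℝ) :
    wignerClIntegrand u v x ξ (2 * t) =
      Complex.exp ((-4 * π * t * ξ : ℝ) * Complex.I) *
        (u (x + t) * (starRingEnd ℂ) (v (x - t))) := by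
  have phase : -2 * Complex.I * (π : ℂ) * ((2 * t : ℝ) : ℂ) * (ξ : ℂ) =
      (-4 * π * t * ξ : ℝ) * Complex.I := by
    push_cast
    ring
  rw [wignerClIntegrand, phase, mul_div_cancel_left₀ t two_ne_zero, mul_assoc]

theorem integrable_wignerClIntegrand {u v : ℝ → ℂ} (hu : MemLp u 2) (hv : MemLp v 2) (x ξ : ℝ) :
    Integrable (wignerClIntegrand u v x ξ) := by
  have hu_shift : MemLp (fun t => u (x + t)) 2 :=
    hu.comp_measurePreserving (measurePreserving_add_left volume x)
  have hv_reflect : MemLp (fun t => (starRingEnd ℂ) (v (x - t))) 2 :=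
    (hv.comp_measurePreserving (Measure.measurePreserving_sub_left volume x)).star
  have phase_continuous :
      Continuous fun t : ℝ => Complex.exp ((-4 * π * t * ξ : ℝ) * Complex.I) := by
    fun_prop
  rw [← integrable_comp_mul_left_iff _ (two_ne_zero' ℝ)]
  simp only [wignerClIntegrand_two_mul]
  exact (hu_shift.integrable_mul hv_reflect).bdd_mul (c := 1)
    phase_continuous.aestronglyMeasurable
    (.of_forall fun t => (Complex.norm_exp_ofReal_mul_I _).le)

-- The parallelogram law `(x + t) ^ 2 + (x - t) ^ 2 = 2 * (x ^ 2 + t ^ 2)` separates `x` from `t`.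
theorem gaussianWeight_add_mul_sub {h : ℝ} (hh : 0 < h) (x t : ℝ) :
    ((π * h) ^ (-(1 : ℝ) / 4) * Real.exp (-(x + t) ^ 2 / (2 * h))) *
        ((π * h) ^ (-(1 : ℝ) / 4) * Real.exp (-(x - t) ^ 2 / (2 * h))) =
      Real.exp (-x ^ 2 / h) * (Real.exp (-t ^ 2 / h) * (π * h) ^ (-(1 : ℝ) / 2)) := by
  have power : (π * h) ^ (-(1 : ℝ) / 4) * (π * h) ^ (-(1 : ℝ) / 4) =
      (π * h) ^ (-(1 : ℝ) / 2) := by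
    rw [← Real.rpow_add (by positivity)]
    norm_num
  have gaussian : Real.exp (-(x + t) ^ 2 / (2 * h)) * Real.exp (-(x - t) ^ 2 / (2 * h)) =
      Real.exp (-x ^ 2 / h) * Real.exp (-t ^ 2 / h) := by
    rw [← Real.exp_add, ← Real.exp_add]
    ring_nf
  rw [mul_mul_mul_comm, power, gaussian]
  ring

theorem gammaMap_add_mul_conj_sub {h : ℝ} (hh : 0 < h) (u v : ℝ → ℂ) (x t : ℝ) :
    gammaMap h u (x + t) * (starRingEnd ℂ) (gammaMap h v (x - t)) =
      (Real.exp (-x ^ 2 / h) : ℂ) *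
        ((Real.exp (-t ^ 2 / h) : ℂ) * (((π * h) ^ (-(1 : ℝ) / 2) : ℝ) : ℂ)) *
          (u (x + t) * (starRingEnd ℂ) (v (x - t))) := by
  simp only [gammaMap, map_mul (starRingEnd ℂ), Complex.conj_ofReal]
  rw [mul_mul_mul_comm, ← Complex.ofReal_mul, gaussianWeight_add_mul_sub hh]
  simp only [Complex.ofReal_mul]

theorem wignerClIntegrand_gammaMap_two_mul {h : ℝ} (hh : 0 < h) (u v : ℝ → ℂ) (x ξ t : ℝ) :
    wignerClIntegrand (gammaMap h u) (gammaMap h v) x (ξ / (2 * π * h)) (2 * t) =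
      (Real.exp (-x ^ 2 / h) : ℂ) * wigner1Integrand h u v x ξ t := by
  have phase : ((-4 * π * t * (ξ / (2 * π * h)) : ℝ) : ℂ) * Complex.I =
      -2 * Complex.I * (ξ : ℂ) * (t : ℂ) / (h : ℂ) := by
    have pi_ne_zero : (π : ℂ) ≠ 0 := Complex.ofReal_ne_zero.2 Real.pi_ne_zero
    push_cast
    field_simp
    ring
  rw [wignerClIntegrand_two_mul, phase, gammaMap_add_mul_conj_sub hh, wigner1Integrand]
  ring

theorem integrable_wignerClIntegrand_gammaMap_iff {h : ℝ} (hh : 0 < h) (u v : ℝ → ℂ) (x ξ : ℝ) :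
    Integrable (wignerClIntegrand (gammaMap h u) (gammaMap h v) x (ξ / (2 * π * h))) ↔
      Integrable (wigner1Integrand h u v x ξ) := by
  have weight_ne_zero : (Real.exp (-x ^ 2 / h) : ℂ) ≠ 0 :=
    Complex.ofReal_ne_zero.2 (Real.exp_ne_zero _)
  rw [← integrable_comp_mul_left_iff _ (two_ne_zero' ℝ)]
  simp only [wignerClIntegrand_gammaMap_two_mul hh]
  exact integrable_const_mul_iff weight_ne_zero.isUnit _

theorem integral_wignerClIntegrand_two_mul (u v : ℝ → ℂ) (x ξ : ℝ) :
    ∫ t, wignerClIntegrand u v x ξ (2 * t) = (1 / 2 : ℂ) * wignerCl u v x ξ := by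
  rw [Measure.integral_comp_mul_left, abs_of_pos (by norm_num), Complex.real_smul, one_div]
  norm_num [wignerCl, wignerClIntegrand]

theorem exp_mul_wigner1 (h : ℝ) (u v : ℝ → ℂ) (x ξ : ℝ) :
    (Real.exp (-(x ^ 2 + ξ ^ 2) / h) : ℂ) * wigner1 h u v x ξ =
      (Real.exp (-x ^ 2 / h) : ℂ) * ∫ t, wigner1Integrand h u v x ξ t := by
  have weight : Real.exp (-(x ^ 2 + ξ ^ 2) / h) * Real.exp (ξ ^ 2 / h) =
      Real.exp (-x ^ 2 / h) := by
    rw [← Real.exp_add]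
    ring_nf
  rw [← weight, Complex.ofReal_mul, mul_assoc]
  rfl

theorem gaussian_vs_classical_wigner_general {h : ℝ} (hh : 0 < h) {u v : ℝ → ℂ} {x ξ : ℝ}
    (hint : Integrable (wignerClIntegrand (gammaMap h u) (gammaMap h v) x (ξ / (2 * π * h)))) :
    Integrable (wigner1Integrand h u v x ξ) ∧
      (Real.exp (-(x ^ 2 + ξ ^ 2) / h) : ℂ) * wigner1 h u v x ξ =
        (1 / 2 : ℂ) * wignerCl (gammaMap h u) (gammaMap h v) x (ξ / (2 * π * h)) := by
  refine ⟨(integrable_wignerClIntegrand_gammaMap_iff hh u v x ξ).1 hint, ?_⟩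
  simp only [exp_mul_wigner1, ← integral_wignerClIntegrand_two_mul,
    wignerClIntegrand_gammaMap_two_mul hh, integral_const_mul]

/-- Relation between the Gaussian Wigner function and the classical one. -/
theorem gaussian_vs_classical_wigner (h : ℝ) (hh : 0 < h) (u v : ℝ → ℂ)
    (hu : ∃ φ : SchwartzMap ℝ ℂ, ∀ y, gammaMap h u y = φ y)
    (hv : ∃ φ : SchwartzMap ℝ ℂ, ∀ y, gammaMap h v y = φ y)
    (x ξ : ℝ) :
    (Real.exp (-(x ^ 2 + ξ ^ 2) / h) : ℂ) * wigner1 h u v x ξ =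
      (1 / 2 : ℂ) * wignerCl (gammaMap h u) (gammaMap h v) x (ξ / (2 * π * h)) := by
  obtain ⟨φ, hφ⟩ := hu
  obtain ⟨ψ, hψ⟩ := hv
  exact (gaussian_vs_classical_wigner_general hh (integrable_wignerClIntegrand
    (funext hφ ▸ φ.memLp 2) (funext hψ ▸ ψ.memLp 2) x _)).2
end
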